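/- arXiv:1910.14439 — 2 statements merged into one kernel-verified Lean document; each statement's English description precedes it below -/
import Mathlib

section
/- Expected hitting time of the ground states: for the periodic SPM at L=L_c=⌊e^{β/2}⌋ and β sufficiently large, let h:Ω→ℝ be the unique function with h≡0 on the set 𝒢 of ground states and (𝓛h)(σ)=−1 for every σ∉𝒢 (so h(σ)=𝔼_σ[τ_𝒢], the expected hitting time of 𝒢 from σ). Then max_{σ∈Ω} h(σ) ≤ C·β⁹·e^{3.75β} for some constant C. -/
open scoped BigOperators

attribute [local instance] Classical.propDecidable

noncomputable section

namespace SPMP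

/-- Spin configurations on the `L × L` torus; `true` codes spin `+1`. -/
abbrev ConfigP (L : ℕ) := Fin L × Fin L → Bool

/-- The real spin value of a Boolean spin. -/
def sval (b : Bool) : ℝ := if b then 1 else -1

/-- Cyclic successor on `Fin L`. -/
def fsucc {L : ℕ} (i : Fin L) : Fin L := ⟨(i.val + 1) % L, Nat.mod_lt _ i.pos⟩

/-- The periodic plaquette variable
`p_x(σ) = σ_{(x₁,x₂)} σ_{(x₁+1,x₂)} σ_{(x₁,x₂+1)} σ_{(x₁+1,x₂+1)}` (coordinates mod `L`). -/
def plaqP (L : ℕ) (σ : ConfigP L) (x : Fin L × Fin L) : ℝ :=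
  sval (σ x) * sval (σ (fsucc x.1, x.2)) * sval (σ (x.1, fsucc x.2)) *
    sval (σ (fsucc x.1, fsucc x.2))

/-- The periodic Hamiltonian `H(σ) = -(1/2) ∑_x p_x(σ)`. -/
def hamP (L : ℕ) (σ : ConfigP L) : ℝ := -(1 / 2) * ∑ x : Fin L × Fin L, plaqP L σ x

/-- The Gibbs measure `π(σ) = e^{-βH(σ)}/Z`. -/
def gibbsP (L : ℕ) (β : ℝ) (σ : ConfigP L) : ℝ :=
  Real.exp (-β * hamP L σ) / ∑ η : ConfigP L, Real.exp (-β * hamP L η)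

/-- Flip one spin. -/
def flipP (L : ℕ) (σ : ConfigP L) (x : Fin L × Fin L) : ConfigP L :=
  fun i => if i = x then !(σ i) else σ i

/-- Metropolis rate of the move `σ → η`: `min(1, e^{-β(H(η)-H(σ))})`. -/
def metroRateP (L : ℕ) (β : ℝ) (σ η : ConfigP L) : ℝ :=
  min 1 (Real.exp (-β * (hamP L η - hamP L σ)))

/-- The Glauber generator of the periodic dynamics, as a matrix. -/
def genP (L : ℕ) (β : ℝ) : Matrix (ConfigP L) (ConfigP L) ℝ :=
  fun σ η =>
    if η = σ then -(∑ x : Fin L × Fin L, metroRateP L β σ (flipP L σ x))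
    else ∑ x : Fin L × Fin L, if η = flipP L σ x then metroRateP L β σ (flipP L σ x) else 0

/-- Entrywise matrix exponential `∑ₖ Aᵏ/k!`. -/
def mexp {n : Type*} [Fintype n] [DecidableEq n] (A : Matrix n n ℝ) : Matrix n n ℝ :=
  fun i j => ∑' k : ℕ, (A ^ k) i j / (Nat.factorial k : ℝ)

/-- Total-variation distance between two (probability) vectors. -/
def tv {n : Type*} [Fintype n] (μ ν : n → ℝ) : ℝ := (∑ s, |μ s - ν s|) / 2

/-- The `ε`-mixing time of the periodic Glauber dynamics. -/
def tmixP (L : ℕ) (β ε : ℝ) : ℝ :=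
  sInf {t : ℝ | 0 < t ∧ ∀ σ : ConfigP L, tv (mexp (t • genP L β) σ) (gibbsP L β) < ε}

/-- The set of ground states: minimizers of the Hamiltonian. -/
def GroundP (L : ℕ) : Set (ConfigP L) := {σ | ∀ η : ConfigP L, hamP L σ ≤ hamP L η}

/-- The critical length scale `L_c = ⌊e^{β/2}⌋`. -/
def Lc (β : ℝ) : ℕ := ⌊Real.exp (β / 2)⌋₊

end SPMP

open SPMP

/-! ### Exponential moments of hitting times of a reversible chain -/

namespace ReversibleChain

variable {S X : Type*} [Fintype S] [Fintype X]

/-- The Metropolis conductance of the move `T x` at the state `s`. -/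
def cond (T : X → S → S) (p : S → ℝ) (x : X) (s : S) : ℝ := min (p s) (p (T x s))

/-- The Metropolis generator with moves `T x` and reversible weight `p`. -/
def gen (T : X → S → S) (p : S → ℝ) (f : S → ℝ) (s : S) : ℝ :=
  ∑ x, cond T p x s / p s * (f (T x s) - f s)

/-- Twice the Dirichlet form of the Metropolis chain. -/
def energy (T : X → S → S) (p : S → ℝ) (f g : S → ℝ) : ℝ :=
  ∑ s, ∑ x, cond T p x s * (f (T x s) - f s) * (g (T x s) - g s)

lemma cond_nonneg {S X : Type*} {T : X → S → S} {p : S → ℝ} (hp : ∀ s, 0 < p s) (x : X) (s : S) :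
    0 ≤ cond T p x s := le_min (hp _).le (hp _).le

lemma energy_nonneg {T : X → S → S} {p : S → ℝ} (hp : ∀ s, 0 < p s) (f : S → ℝ) :
    0 ≤ energy T p f f :=
  Finset.sum_nonneg fun s _ => Finset.sum_nonneg fun x _ => by
    rw [mul_assoc]
    exact mul_nonneg (cond_nonneg hp x s) (mul_self_nonneg _)

lemma sum_mul_gen {T : X → S → S} (hT : ∀ x s, T x (T x s) = s) {p : S → ℝ}
    (hp : ∀ s, 0 < p s) (f g : S → ℝ) :
    ∑ s, p s * g s * gen T p f s = -(energy T p f g / 2) := by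
  have h1 : ∑ s, p s * g s * gen T p f s
      = ∑ x, ∑ s, cond T p x s * (f (T x s) - f s) * g s := by
    rw [Finset.sum_comm]
    refine Finset.sum_congr rfl fun s _ => ?_
    rw [gen, Finset.mul_sum]
    refine Finset.sum_congr rfl fun x _ => ?_
    have := (hp s).ne'
    field_simp
  have h2 : ∀ x, ∑ s, cond T p x s * (f (T x s) - f s) * g s
      = ∑ s, cond T p x s * (f s - f (T x s)) * g (T x s) := by
    intro x
    have hinv : Function.Involutive (T x) := hT x
    refine Fintype.sum_equiv hinv.toPerm _ _ fun s => ?_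
    simp only [Function.Involutive.coe_toPerm, cond, hT]
    rw [min_comm]
  have h3 : energy T p f g
      = ∑ x, ∑ s, (cond T p x s * (f (T x s) - f s) * g (T x s)
          - cond T p x s * (f (T x s) - f s) * g s) := by
    rw [energy, Finset.sum_comm]
    exact Finset.sum_congr rfl fun x _ => Finset.sum_congr rfl fun s _ => by ring
  have h4 : energy T p f g
      = -(2 * ∑ x, ∑ s, cond T p x s * (f (T x s) - f s) * g s) := by
    rw [h3, Finset.mul_sum, ← Finset.sum_neg_distrib]
    refine Finset.sum_congr rfl fun x _ => ?_
    rw [Finset.sum_sub_distrib, two_mul, neg_add]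
    nth_rewrite 2 [h2 x]
    rw [← Finset.sum_neg_distrib, sub_eq_add_neg]
    congr 1
    exact Finset.sum_congr rfl fun s _ => by ring
  rw [h1, h4]
  ring

/-- Under a weighted Dirichlet–Poincaré inequality, the exponential moment `1 + g` of the additive
functional `∑ m` up to the exit from `B` exists and is controlled in mean square. -/
theorem exists_exponential_moment {T : X → S → S} (hT : ∀ x s, T x (T x s) = s) {p : S → ℝ}
    (hp : ∀ s, 0 < p s) (B : Set S) {m : S → ℝ} (hm : ∀ s, 0 ≤ m s) (hmB : ∀ s ∈ B, 0 < m s)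
    {K : ℝ} (hK : 0 < K)
    (hpoinc : ∀ f : S → ℝ, (∀ s, s ∉ B → f s = 0) →
      ∑ s, p s * m s * f s ^ 2 ≤ K * energy T p f f) :
    ∃ g : S → ℝ, (∀ s, 0 ≤ g s) ∧ (∀ s, s ∉ B → g s = 0) ∧
      (∀ s ∈ B, gen T p g s = -(1 / (4 * K) * m s * (1 + g s))) ∧
      ∑ s, p s * m s * g s ^ 2 ≤ ∑ s, p s * m s := by
  set a : ℝ := 1 / (4 * K) with ha
  have ha0 : 0 < a := by positivity
  have haK : a * K = 1 / 4 := by rw [ha]; field_simp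
  -- a function vanishing off `B` whose energy is dominated must vanish
  have hzero : ∀ f : S → ℝ, (∀ s, s ∉ B → f s = 0) →
      energy T p f f / 2 ≤ a * ∑ s, p s * m s * f s ^ 2 → ∀ s, f s = 0 := by
    intro f hf hE
    have h1 := hpoinc f hf
    have h2 := energy_nonneg (T := T) hp f
    have h3 : a * ∑ s, p s * m s * f s ^ 2 ≤ energy T p f f / 4 := by
      calc a * ∑ s, p s * m s * f s ^ 2 ≤ a * (K * energy T p f f) :=
            mul_le_mul_of_nonneg_left h1 ha0.le
        _ = (a * K) * energy T p f f := by ring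
        _ = energy T p f f / 4 := by rw [haK]; ring
    have h4 : energy T p f f = 0 := by linarith
    rw [h4, mul_zero] at h1
    have hnn : ∀ s ∈ Finset.univ, 0 ≤ p s * m s * f s ^ 2 := fun s _ =>
      mul_nonneg (mul_nonneg (hp s).le (hm s)) (sq_nonneg _)
    have h5 := (Finset.sum_eq_zero_iff_of_nonneg hnn).1 (le_antisymm h1 (Finset.sum_nonneg hnn))
    intro s
    by_cases hs : s ∈ B
    · have h6 := h5 s (Finset.mem_univ s)
      have h7 : 0 < p s * m s := mul_pos (hp s) (hmB s hs)
      have h8 := (mul_eq_zero.1 h6).resolve_left h7.ne'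
      exact pow_eq_zero_iff (two_ne_zero) |>.1 h8
    · exact hf s hs
  let A : (S → ℝ) →ₗ[ℝ] (S → ℝ) :=
    { toFun := fun g s => if s ∈ B then -gen T p g s - a * m s * g s else g s
      map_add' := by
        intro f g
        funext s
        simp only [Pi.add_apply]
        split_ifs
        · simp only [gen, Pi.add_apply]
          have : ∑ x, cond T p x s / p s * (f (T x s) + g (T x s) - (f s + g s))
              = ∑ x, cond T p x s / p s * (f (T x s) - f s)
                + ∑ x, cond T p x s / p s * (g (T x s) - g s) := by
            rw [← Finset.sum_add_distrib]
            exact Finset.sum_congr rfl fun x _ => by ring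
          rw [this]; ring
        · rfl
      map_smul' := by
        intro b g
        funext s
        simp only [Pi.smul_apply, smul_eq_mul, RingHom.id_apply]
        split_ifs
        · simp only [gen, Pi.smul_apply, smul_eq_mul]
          have : ∑ x, cond T p x s / p s * (b * g (T x s) - b * g s)
              = b * ∑ x, cond T p x s / p s * (g (T x s) - g s) := by
            rw [Finset.mul_sum]
            exact Finset.sum_congr rfl fun x _ => by ring
          rw [this]; ring
        · rfl }
  have hA : ∀ g s, A g s = if s ∈ B then -gen T p g s - a * m s * g s else g s := fun _ _ => rfl
  have hinj : Function.Injective A := by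
    rw [← LinearMap.ker_eq_bot, LinearMap.ker_eq_bot']
    intro g hg
    have hoff : ∀ s, s ∉ B → g s = 0 := by
      intro s hs
      have := congrFun hg s
      rw [hA, if_neg hs] at this
      simpa using this
    have hon : ∀ s, p s * g s * gen T p g s = -(a * (p s * m s * g s ^ 2)) := by
      intro s
      by_cases hs : s ∈ B
      · have := congrFun hg s
        rw [hA, if_pos hs, Pi.zero_apply] at this
        have h2 : gen T p g s = -(a * m s * g s) := by linarith
        rw [h2]; ring
      · rw [hoff s hs]; ring
    have hsum := sum_mul_gen hT hp g g
    rw [Finset.sum_congr rfl fun s _ => hon s, Finset.sum_neg_distrib, ← Finset.mul_sum] at hsum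
    funext s
    exact hzero g hoff (by linarith) s
  obtain ⟨g, hg⟩ := LinearMap.injective_iff_surjective.1 hinj (fun s => if s ∈ B then a * m s else 0)
  have hoff : ∀ s, s ∉ B → g s = 0 := by
    intro s hs
    have := congrFun hg s
    simpa [hA, hs] using this
  have hon : ∀ s ∈ B, gen T p g s = -(a * m s * (1 + g s)) := by
    intro s hs
    have := congrFun hg s
    rw [hA, if_pos hs, if_pos hs] at this
    linarith
  have hpos : ∀ s, 0 ≤ g s := by
    set k : S → ℝ := fun s => max (-g s) 0 with hk
    have hkoff : ∀ s, s ∉ B → k s = 0 := fun s hs => by simp [hk, hoff s hs]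
    have hterm : ∀ s, -(p s * k s * gen T p g s) ≥ -(a * (p s * m s * k s ^ 2)) := by
      intro s
      by_cases hs : s ∈ B
      · rw [hon s hs]
        have h1 : k s * g s = -(k s ^ 2) := by
          simp only [hk]
          rcases le_total (-g s) 0 with h | h
          · rw [max_eq_right h]; ring
          · rw [max_eq_left h]; ring
        have h2 : 0 ≤ a * (p s * m s * k s) :=
          mul_nonneg ha0.le (mul_nonneg (mul_nonneg (hp s).le (hm s)) (le_max_right _ _))
        have h3 : -(p s * k s * -(a * m s * (1 + g s)))
            = a * (p s * m s * k s) + a * (p s * m s) * (k s * g s) := by ring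
        rw [h3, h1]
        nlinarith
      · rw [hkoff s hs]; simp
    have hEk : energy T p g k ≤ -energy T p k k := by
      rw [energy, energy, ← Finset.sum_neg_distrib]
      refine Finset.sum_le_sum fun s _ => ?_
      rw [← Finset.sum_neg_distrib]
      refine Finset.sum_le_sum fun x _ => ?_
      have hc := cond_nonneg (T := T) hp x s
      have key : (g (T x s) - g s) * (k (T x s) - k s)
          ≤ -((k (T x s) - k s) * (k (T x s) - k s)) := by
        simp only [hk]
        rcases le_total (-g s) 0 with h | h <;> rcases le_total (-g (T x s)) 0 with h' | h' <;>
          simp only [max_eq_left, max_eq_right, h, h'] <;> nlinarith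
      have := mul_le_mul_of_nonneg_left key hc
      linarith
    have hsum := sum_mul_gen hT hp g k
    have hge : a * ∑ s, p s * m s * k s ^ 2 ≥ ∑ s, p s * k s * gen T p g s := by
      rw [Finset.mul_sum]
      exact Finset.sum_le_sum fun s _ => by linarith [hterm s]
    intro s
    have := hzero k hkoff (by linarith) s
    simp only [hk] at this
    have h := le_max_left (-g s) 0
    linarith
  refine ⟨g, hpos, hoff, hon, ?_⟩
  have hsum := sum_mul_gen hT hp g g
  have hterm : ∀ s, p s * g s * gen T p g s
      = -(a * (p s * m s * g s ^ 2 + p s * m s * g s)) := by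
    intro s
    by_cases hs : s ∈ B
    · rw [hon s hs]; ring
    · rw [hoff s hs]; ring
  rw [Finset.sum_congr rfl fun s _ => hterm s, Finset.sum_neg_distrib, ← Finset.mul_sum,
    Finset.sum_add_distrib] at hsum
  have hP := hpoinc g hoff
  have hR : ∑ s, p s * m s * g s
      ≤ (∑ s, p s * m s * g s ^ 2) / 2 + (∑ s, p s * m s) / 2 := by
    rw [Finset.sum_div, Finset.sum_div, ← Finset.sum_add_distrib]
    refine Finset.sum_le_sum fun s _ => ?_
    have : 0 ≤ p s * m s := mul_nonneg (hp s).le (hm s)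
    nlinarith [mul_nonneg this (sq_nonneg (g s - 1))]
  have hE : K * energy T p g g
      = 2 * (a * K) * (∑ s, p s * m s * g s ^ 2 + ∑ s, p s * m s * g s) := by
    linear_combination 2 * K * hsum
  rw [haK] at hE
  linarith

end ReversibleChain

/-! ### Defect fields on the discrete torus -/

namespace Plaquette

variable {L : ℕ} [NeZero L]

/-- A set of defective plaquettes on the torus, as a field with values in `ℤ/2`. -/
abbrev Defects (L : ℕ) := ZMod L × ZMod L → ZMod 2

/-- The real indicator of `a = 1`. -/
def ind (a : ZMod 2) : ℝ := if a = 1 then 1 else 0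

/-- The field with a single defect. -/
def pt (p : ZMod L × ZMod L) : Defects L := fun q => if q = p then 1 else 0

/-- The number of defects. -/
def num (D : Defects L) : ℝ := ∑ p, ind (D p)

/-- The number of defects of a row. -/
def rowNum (D : Defects L) (r : ZMod L) : ℝ := ∑ c, ind (D (r, c))

/-- The Boltzmann weight of a field. -/
def wt (β : ℝ) (D : Defects L) : ℝ := Real.exp (-β * num D)

/-- The four plaquettes toggled by one spin flip. -/
def quad (x : ZMod L × ZMod L) : Defects L :=
  pt x + pt (x.1 + 1, x.2) + pt (x.1, x.2 + 1) + pt (x.1 + 1, x.2 + 1)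

/-- Toggle the four plaquettes of `quad x`. -/
def toggle (x : ZMod L × ZMod L) (D : Defects L) : Defects L := D + quad x

/-- Every row and every column holds an even number of defects. -/
def Even (D : Defects L) : Prop := (∀ r, ∑ c, D (r, c) = 0) ∧ ∀ c, ∑ r, D (r, c) = 0

lemma two_eq_zero {L : ℕ} : (2 : Defects L) = 0 := by
  funext p; exact (by decide : (2 : ZMod 2) = 0)

lemma eq_one_or (a : ZMod 2) : a = 1 ∨ a = 0 := by
  revert a; decide

lemma ind_nonneg (a : ZMod 2) : 0 ≤ ind a := by unfold ind; split_ifs <;> norm_num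

lemma ind_le_one (a : ZMod 2) : ind a ≤ 1 := by unfold ind; split_ifs <;> norm_num

lemma ind_one : ind 1 = 1 := if_pos rfl

lemma ind_zero : ind 0 = 0 := if_neg (by decide)

lemma ind_add_one (a : ZMod 2) : ind (a + 1) = 1 - ind a := by
  rcases eq_one_or a with rfl | rfl
  · rw [show (1 : ZMod 2) + 1 = 0 by decide, ind_zero, ind_one]; norm_num
  · rw [zero_add, ind_zero, ind_one]; norm_num

lemma num_nonneg (D : Defects L) : 0 ≤ num D := Finset.sum_nonneg fun _ _ => ind_nonneg _

lemma rowNum_nonneg (D : Defects L) (r : ZMod L) : 0 ≤ rowNum D r :=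
  Finset.sum_nonneg fun _ _ => ind_nonneg _

lemma sum_const_torus (a : ℝ) : ∑ _c : ZMod L, a = L * a := by simp

lemma rowNum_le (D : Defects L) (r : ZMod L) : rowNum D r ≤ L := by
  calc rowNum D r ≤ ∑ _c : ZMod L, (1 : ℝ) := Finset.sum_le_sum fun _ _ => ind_le_one _
    _ = L := by simp

lemma sum_rowNum (D : Defects L) : ∑ r, rowNum D r = num D := by
  rw [num, Fintype.sum_prod_type]; rfl

lemma wt_pos (β : ℝ) (D : Defects L) : 0 < wt β D := Real.exp_pos _

lemma pt_self {L : ℕ} (p : ZMod L × ZMod L) : pt p p = 1 := if_pos rfl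

lemma pt_of_ne {L : ℕ} {p q : ZMod L × ZMod L} (h : q ≠ p) : pt p q = 0 := if_neg h

lemma toggle_toggle {L : ℕ} (x : ZMod L × ZMod L) (D : Defects L) : toggle x (toggle x D) = D := by
  unfold toggle; linear_combination quad x * two_eq_zero (L := L)

/-- Adding a defect at `p` changes the count by one, in a direction read off the new field. -/
lemma num_add_pt (D : Defects L) (p : ZMod L × ZMod L) :
    num (D + pt p) = num D + (2 * ind ((D + pt p) p) - 1) := by
  have h : ∀ q, ind ((D + pt p) q) = ind (D q) + if q = p then 2 * ind ((D + pt p) p) - 1 else 0 := by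
    intro q
    by_cases hq : q = p
    · subst hq
      rw [if_pos rfl, Pi.add_apply, pt_self, ind_add_one]; ring
    · rw [if_neg hq, Pi.add_apply, pt_of_ne hq, add_zero, add_zero]
  unfold num
  rw [Finset.sum_congr rfl fun q _ => h q, Finset.sum_add_distrib, Finset.sum_ite_eq']
  simp

lemma num_add_pt_of_mem {D : Defects L} {p : ZMod L × ZMod L} (h : D p = 1) :
    num (D + pt p) = num D - 1 := by
  rw [num_add_pt, Pi.add_apply, pt_self, ind_add_one, h, ind_one]; ring

lemma num_add_pt_le (D : Defects L) (p : ZMod L × ZMod L) : num (D + pt p) ≤ num D + 1 := by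
  rw [num_add_pt]
  linarith [ind_le_one ((D + pt p) p)]

lemma rowNum_add_pt_le (D : Defects L) (p : ZMod L × ZMod L) (r : ZMod L) :
    rowNum (D + pt p) r ≤ rowNum D r + 1 := by
  have h : ∀ c, ind ((D + pt p) (r, c)) ≤ ind (D (r, c)) + if c = p.2 then 1 else 0 := by
    intro c
    by_cases hc : c = p.2
    · rw [if_pos hc]
      linarith [ind_le_one ((D + pt p) (r, c)), ind_nonneg (D (r, c))]
    · rw [if_neg hc, Pi.add_apply, pt_of_ne (fun h => hc (by rw [← h])), add_zero, add_zero]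
  calc rowNum (D + pt p) r ≤ ∑ c, (ind (D (r, c)) + if c = p.2 then (1 : ℝ) else 0) :=
        Finset.sum_le_sum fun c _ => h c
    _ = rowNum D r + 1 := by
        rw [Finset.sum_add_distrib, Finset.sum_ite_eq']; simp [rowNum]

lemma one_le_num {D : Defects L} (h : D ≠ 0) : 1 ≤ num D := by
  obtain ⟨p, hp⟩ := Function.ne_iff.1 h
  have hp1 : D p = 1 := (eq_one_or _).resolve_right hp
  calc (1 : ℝ) = ind (D p) := by rw [hp1, ind_one]
    _ ≤ num D := Finset.single_le_sum (f := fun q => ind (D q))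
        (fun _ _ => ind_nonneg _) (Finset.mem_univ p)

lemma exists_ne_of_sum_eq_zero {a : ZMod L → ZMod 2} (h : ∑ c, a c = 0) {c : ZMod L}
    (hc : a c = 1) : ∃ c', c' ≠ c ∧ a c' = 1 := by
  by_contra! hcon
  have : ∑ c, a c = a c := by
    refine Finset.sum_eq_single c (fun b _ hb => ?_) (fun h => absurd (Finset.mem_univ c) h)
    exact (eq_one_or _).resolve_left (hcon b hb)
  rw [h, hc] at this
  exact absurd this (by decide)

/-! ### Gaps between consecutive defects -/

/-- The distance from `c` to the next point where `a` equals `1`, going around the circle. -/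
def gap (a : ZMod L → ZMod 2) (c : ZMod L) : ℕ := sInf {w : ℕ | 0 < w ∧ a (c + w) = 1}

lemma gap_spec {a : ZMod L → ZMod 2} {c : ZMod L} (hc : a c = 1) :
    0 < gap a c ∧ a (c + gap a c) = 1 :=
  Nat.sInf_mem (s := {w : ℕ | 0 < w ∧ a (c + w) = 1}) ⟨L, NeZero.pos L, by simpa using hc⟩

lemma gap_le {L : ℕ} {a : ZMod L → ZMod 2} {c : ZMod L} {w : ℕ} (hw : 0 < w) (h : a (c + w) = 1) :
    gap a c ≤ w := Nat.sInf_le ⟨hw, h⟩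

lemma gap_le_size {a : ZMod L → ZMod 2} {c : ZMod L} (hc : a c = 1) : gap a c ≤ L :=
  gap_le (NeZero.pos L) (by simpa using hc)

lemma add_gap_ne {a : ZMod L → ZMod 2} (h : ∑ c, a c = 0) {c : ZMod L} (hc : a c = 1) :
    c + gap a c ≠ c := by
  obtain ⟨c', hne, hc'⟩ := exists_ne_of_sum_eq_zero h hc
  have h0 : c' - c ≠ 0 := sub_ne_zero.2 hne
  have hle : gap a c ≤ (c' - c).val := by
    refine gap_le (Nat.pos_of_ne_zero fun h => h0 ((ZMod.val_eq_zero _).1 h)) ?_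
    rw [ZMod.natCast_zmod_val, add_sub_cancel]; exact hc'
  have hlt : gap a c < L := hle.trans_lt (ZMod.val_lt _)
  intro heq
  have hz : ((gap a c : ℕ) : ZMod L) = 0 := by simpa using heq
  rw [ZMod.natCast_eq_zero_iff] at hz
  exact absurd (Nat.le_of_dvd (gap_spec hc).1 hz) (not_le.2 hlt)

/-- The gaps starting at distinct points are disjoint arcs of the circle. -/
lemma sum_gap_le (a : ZMod L → ZMod 2) : ∑ c, ind (a c) * (gap a c : ℝ) ≤ L := by
  set s : Finset (ZMod L) := Finset.univ.filter fun c => a c = 1 with hs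
  have h1 : ∑ c, ind (a c) * (gap a c : ℝ) = ((∑ c ∈ s, gap a c : ℕ) : ℝ) := by
    rw [hs, Finset.sum_filter, Nat.cast_sum]
    refine Finset.sum_congr rfl fun c _ => ?_
    by_cases hc : a c = 1 <;> simp [ind, hc]
  have h2 : ∑ c ∈ s, gap a c = (s.sigma fun c => Finset.range (gap a c)).card := by
    rw [Finset.card_sigma]; simp
  have key : ∀ c ∈ s, ∀ c' ∈ s, ∀ i < gap a c, ∀ j < gap a c', i ≤ j → c + i = c' + j → i = j := by
    intro c hc c' _ i _ j hj hij heq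
    by_contra hne
    have hlt : 0 < j - i := by omega
    have hcc : c' + ((j - i : ℕ) : ZMod L) = c := by
      rw [Nat.cast_sub hij]; linear_combination -heq
    have := gap_le (a := a) (c := c') hlt (by rw [hcc]; exact (Finset.mem_filter.1 hc).2)
    omega
  have h3 : (s.sigma fun c => Finset.range (gap a c)).card ≤ (Finset.univ : Finset (ZMod L)).card := by
    refine Finset.card_le_card_of_injOn (fun q => q.1 + q.2) (fun _ _ => by simp) ?_
    rintro ⟨c, i⟩ hci ⟨c', j⟩ hcj heq
    simp only [Finset.coe_sigma, Set.mem_sigma_iff, Finset.mem_coe, Finset.mem_range] at hci hcj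
    simp only at heq
    have hij : i = j := by
      rcases le_total i j with h | h
      · exact key c hci.1 c' hcj.1 i hci.2 j hcj.2 h heq
      · exact (key c' hcj.1 c hci.1 j hcj.2 i hci.2 h heq.symm).symm
    subst hij
    have : c = c' := add_right_cancel heq
    subst this
    rfl
  rw [h1, h2]
  have h4 : (Finset.univ : Finset (ZMod L)).card = L := by simp
  exact_mod_cast h4 ▸ h3

/-! ### Moving an edge of defects across the torus -/

/-- The field toggled when the rectangle `[r, ρ) × [c, c')` and the segment `{ρ} × [c, κ)` have been
swept. -/
def sweep (r c c' ρ κ : ZMod L) : Defects L :=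
  pt (r, c) + pt (r, c') + pt (ρ, κ) + pt (ρ + 1, κ) + pt (ρ, c') + pt (ρ + 1, c)

/-- The four corners of a rectangle. -/
def rect (r c r' c' : ZMod L) : Defects L := pt (r, c) + pt (r, c') + pt (r', c) + pt (r', c')

lemma sweep_start {L : ℕ} (r c c' : ZMod L) : sweep r c c' r c = 0 := by
  unfold sweep
  linear_combination (pt (r, c) + pt (r, c') + pt (r + 1, c)) * two_eq_zero (L := L)

lemma sweep_row_start {L : ℕ} (r c c' ρ : ZMod L) : sweep r c c' ρ c = rect r c ρ c' := by
  unfold sweep rect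
  linear_combination (pt (ρ + 1, c)) * two_eq_zero (L := L)

lemma sweep_row_end {L : ℕ} (r c c' ρ : ZMod L) : sweep r c c' ρ c' = sweep r c c' (ρ + 1) c := by
  rw [sweep_row_start]
  unfold sweep rect
  linear_combination (pt (ρ, c')) * two_eq_zero (L := L)

lemma sweep_succ {L : ℕ} (r c c' ρ κ : ZMod L) :
    sweep r c c' ρ (κ + 1) = sweep r c c' ρ κ + quad (ρ, κ) := by
  unfold sweep quad
  linear_combination (-pt (ρ, κ) - pt (ρ + 1, κ)) * two_eq_zero (L := L)

/-- The energy along a sweep exceeds the initial one by at most two, and by less unless the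
endpoints of the moving edge show up as defects. -/
lemma wt_le_sweep {β : ℝ} (hβ : 0 ≤ β) {D : Defects L} {r c c' : ZMod L} (hcc : c' ≠ c)
    (h1 : D (r, c) = 1) (h2 : D (r, c') = 1) (ρ κ : ZMod L) (S : Defects L)
    (hS : S = D + sweep r c c' ρ κ) :
    wt β D ≤ wt β S * (Real.exp (2 * β) *
      ((ind (S (ρ, c')) + Real.exp (-2 * β)) * (ind (S (ρ + 1, c)) + Real.exp (-2 * β)))) := by
  set D₂ : Defects L := D + pt (r, c) + pt (r, c') + pt (ρ, κ) + pt (ρ + 1, κ) with hD₂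
  have hS' : S = D₂ + pt (ρ, c') + pt (ρ + 1, c) := by rw [hS, hD₂, sweep]; abel
  have hn : num D₂ ≤ num D := by
    have e1 : num (D + pt (r, c)) = num D - 1 := num_add_pt_of_mem h1
    have e2 : num (D + pt (r, c) + pt (r, c')) = num (D + pt (r, c)) - 1 := by
      refine num_add_pt_of_mem ?_
      rw [Pi.add_apply, pt_of_ne (fun h => hcc (congrArg Prod.snd h)), add_zero, h2]
    have e3 := num_add_pt_le (D + pt (r, c) + pt (r, c')) (ρ, κ)
    have e4 := num_add_pt_le (D + pt (r, c) + pt (r, c') + pt (ρ, κ)) (ρ + 1, κ)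
    rw [hD₂]; linarith
  have f1 := num_add_pt D₂ (ρ, c')
  have f2 := num_add_pt (D₂ + pt (ρ, c')) (ρ + 1, c)
  have f3 : (D₂ + pt (ρ, c')) (ρ, c') = S (ρ, c') := by
    rw [hS', Pi.add_apply (D₂ + pt (ρ, c')),
      pt_of_ne (p := (ρ + 1, c)) (fun h => hcc (congrArg Prod.snd h)), add_zero]
  rw [f3] at f1
  rw [← hS'] at f2
  have hnum : num S ≤ num D + (2 * ind (S (ρ, c')) - 1) + (2 * ind (S (ρ + 1, c)) - 1) := by linarith
  have hexp : ∀ a : ZMod 2, Real.exp (β * (2 * ind a - 1)) ≤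
      Real.exp β * (ind a + Real.exp (-2 * β)) := by
    intro a
    rcases eq_one_or a with rfl | rfl
    · rw [ind_one]
      have : Real.exp (β * (2 * 1 - 1)) = Real.exp β := by congr 1; ring
      rw [this]
      nlinarith [Real.exp_pos β, Real.exp_pos (-2 * β), mul_pos (Real.exp_pos β) (Real.exp_pos (-2 * β))]
    · rw [ind_zero, zero_add, ← Real.exp_add]
      apply le_of_eq; congr 1; ring
  calc wt β D ≤ wt β S * (Real.exp (β * (2 * ind (S (ρ, c')) - 1))
          * Real.exp (β * (2 * ind (S (ρ + 1, c)) - 1))) := by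
        unfold wt
        rw [← Real.exp_add, ← Real.exp_add, Real.exp_le_exp]
        nlinarith [mul_le_mul_of_nonneg_left hnum hβ]
    _ ≤ wt β S * ((Real.exp β * (ind (S (ρ, c')) + Real.exp (-2 * β)))
          * (Real.exp β * (ind (S (ρ + 1, c)) + Real.exp (-2 * β)))) := by
        refine mul_le_mul_of_nonneg_left ?_ (wt_pos _ _).le
        exact mul_le_mul (hexp _) (hexp _) (Real.exp_pos _).le
          (mul_nonneg (Real.exp_pos _).le (add_nonneg (ind_nonneg _) (Real.exp_pos _).le))
    _ = _ := by
        rw [show Real.exp (2 * β) = Real.exp β * Real.exp β by rw [← Real.exp_add]; congr 1; ring]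
        ring

lemma rowNum_sweep_le (D : Defects L) (r c c' ρ κ s : ZMod L) :
    rowNum (D + sweep r c c' ρ κ) s ≤ rowNum D s + 6 := by
  have h : D + sweep r c c' ρ κ = D + pt (r, c) + pt (r, c') + pt (ρ, κ) + pt (ρ + 1, κ)
      + pt (ρ, c') + pt (ρ + 1, c) := by rw [sweep]; abel
  rw [h]
  have e1 := rowNum_add_pt_le D (r, c) s
  have e2 := rowNum_add_pt_le (D + pt (r, c)) (r, c') s
  have e3 := rowNum_add_pt_le (D + pt (r, c) + pt (r, c')) (ρ, κ) s
  have e4 := rowNum_add_pt_le (D + pt (r, c) + pt (r, c') + pt (ρ, κ)) (ρ + 1, κ) s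
  have e5 := rowNum_add_pt_le (D + pt (r, c) + pt (r, c') + pt (ρ, κ) + pt (ρ + 1, κ)) (ρ, c') s
  have e6 := rowNum_add_pt_le (D + pt (r, c) + pt (r, c') + pt (ρ, κ) + pt (ρ + 1, κ)
    + pt (ρ, c')) (ρ + 1, c) s
  linarith

/-- Toggling a rectangle with three defective corners removes at least two defects. -/
lemma wt_le_rect {β : ℝ} {D : Defects L} {r c r' c' : ZMod L} (hcc : c' ≠ c)
    (hrr : r' ≠ r) (h1 : D (r, c) = 1) (h2 : D (r, c') = 1) (h3 : D (r', c) = 1) (S : Defects L)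
    (hS : S = D + rect r c r' c') :
    wt β D ≤ wt β S * (Real.exp (-2 * β) * ind (S (r', c')) + Real.exp (-4 * β)) := by
  set D₃ : Defects L := D + pt (r, c) + pt (r, c') + pt (r', c) with hD₃
  have hS' : S = D₃ + pt (r', c') := by rw [hS, hD₃, rect]; abel
  have e1 : num (D + pt (r, c)) = num D - 1 := num_add_pt_of_mem h1
  have e2 : num (D + pt (r, c) + pt (r, c')) = num (D + pt (r, c)) - 1 := by
    refine num_add_pt_of_mem ?_
    rw [Pi.add_apply, pt_of_ne (fun h => hcc (congrArg Prod.snd h)), add_zero, h2]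
  have e3 : num D₃ = num (D + pt (r, c) + pt (r, c')) - 1 := by
    refine num_add_pt_of_mem ?_
    rw [Pi.add_apply, Pi.add_apply, pt_of_ne (fun h => hrr (congrArg Prod.fst h)),
      pt_of_ne (fun h => hrr (congrArg Prod.fst h)), add_zero, add_zero, h3]
  have e4 := num_add_pt D₃ (r', c')
  rw [← hS'] at e4
  have hnum : num D = num S + 4 - 2 * ind (S (r', c')) := by linarith
  have hw : wt β D = wt β S * Real.exp (-β * (4 - 2 * ind (S (r', c')))) := by
    unfold wt
    rw [← Real.exp_add]; congr 1; rw [hnum]; ring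
  rw [hw]
  refine mul_le_mul_of_nonneg_left ?_ (wt_pos _ _).le
  rcases eq_one_or (S (r', c')) with h | h <;> rw [h]
  · rw [ind_one, show -β * (4 - 2 * 1) = -2 * β by ring]
    linarith [Real.exp_pos (-4 * β)]
  · rw [ind_zero, show -β * (4 - 2 * 0) = -4 * β by ring]
    linarith

/-! ### The chain of rectangle moves -/

/-- The distance to the next defect of the row. -/
def width (D : Defects L) (d : ZMod L × ZMod L) : ℕ := gap (fun c => D (d.1, c)) d.2

/-- The distance to the next defect of the column. -/
def height (D : Defects L) (d : ZMod L × ZMod L) : ℕ := gap (fun r => D (r, d.2)) d.1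

/-- The field obtained by toggling the rectangle spanned by `d` and the next defects of its row and
its column. -/
def target (D : Defects L) (d : ZMod L × ZMod L) : Defects L :=
  D + rect d.1 d.2 (d.1 + height D d) (d.2 + width D d)

/-- The congestion factor of the rows of a field. -/
def load (D : Defects L) : ℝ := ∑ r, (rowNum D r + 7) ^ 2

/-- The rate at which the rectangle at `d` is toggled. -/
def rate (D : Defects L) (d : ZMod L × ZMod L) : ℝ :=
  ind (D d) / (width D d * height D d * load D)

lemma width_pos {D : Defects L} {d : ZMod L × ZMod L} (h : D d = 1) : 0 < width D d :=
  (gap_spec (a := fun c => D (d.1, c)) h).1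

lemma height_pos {D : Defects L} {d : ZMod L × ZMod L} (h : D d = 1) : 0 < height D d :=
  (gap_spec (a := fun r => D (r, d.2)) h).1

lemma width_le {D : Defects L} {d : ZMod L × ZMod L} (h : D d = 1) : width D d ≤ L :=
  gap_le_size (a := fun c => D (d.1, c)) h

lemma height_le {D : Defects L} {d : ZMod L × ZMod L} (h : D d = 1) : height D d ≤ L :=
  gap_le_size (a := fun r => D (r, d.2)) h

lemma size_pos : (1 : ℝ) ≤ L := by exact_mod_cast NeZero.pos L

lemma load_ge (D : Defects L) : 49 * (L : ℝ) ≤ load D := by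
  calc 49 * (L : ℝ) = ∑ _r : ZMod L, (49 : ℝ) := by rw [sum_const_torus]; ring
    _ ≤ load D := Finset.sum_le_sum fun r _ => by nlinarith [rowNum_nonneg D r]

lemma load_pos (D : Defects L) : 0 < load D := by
  have := load_ge D
  have := size_pos (L := L)
  linarith

lemma rate_nonneg (D : Defects L) (d : ZMod L × ZMod L) : 0 ≤ rate D d :=
  div_nonneg (ind_nonneg _) (mul_nonneg (by positivity) (load_pos D).le)

lemma sum_width_le (D : Defects L) (r : ZMod L) :
    ∑ c, ind (D (r, c)) * (width D (r, c) : ℝ) ≤ L := sum_gap_le fun c => D (r, c)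

lemma sum_height_le (D : Defects L) (c : ZMod L) :
    ∑ r, ind (D (r, c)) * (height D (r, c) : ℝ) ≤ L := sum_gap_le fun r => D (r, c)

lemma inv_mul_ge {s w t : ℝ} (hs : 0 ≤ s) (hw : 0 < w) (ht : 0 < t) :
    3 * s ^ 2 - s ^ 3 * (w + t) ≤ 1 / (w * t) := by
  set q := Real.sqrt (w * t) with hq
  have hq2 : q ^ 2 = w * t := Real.sq_sqrt (mul_pos hw ht).le
  have hq0 : 0 < q := Real.sqrt_pos.2 (mul_pos hw ht)
  have hwt : 2 * q ≤ w + t := by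
    have : (2 * q) ^ 2 ≤ (w + t) ^ 2 := by nlinarith [sq_nonneg (w - t)]
    exact (sq_le_sq₀ (by positivity) (by positivity)).1 this
  rw [← hq2, le_div_iff₀ (by positivity)]
  have h1 : s ^ 3 * (2 * q) ≤ s ^ 3 * (w + t) := mul_le_mul_of_nonneg_left hwt (by positivity)
  have h2 : (3 * s ^ 2 - s ^ 3 * (w + t)) * q ^ 2 ≤ (3 * s ^ 2 - s ^ 3 * (2 * q)) * q ^ 2 :=
    mul_le_mul_of_nonneg_right (by linarith) (by positivity)
  have h3 : 0 ≤ (s * q - 1) ^ 2 * (2 * (s * q) + 1) := by positivity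
  nlinarith

/-- The total rate out of a field is bounded below by its number of defects. -/
lemma sum_rate_ge (D : Defects L) :
    num D / (100 * ((L : ℝ) ^ 3 * Real.sqrt L)) ≤ ∑ d, rate D d := by
  set l : ℝ := (L : ℝ) with hl
  have hl1 : 1 ≤ l := size_pos
  have hl0 : 0 < l := by linarith
  set X : ℝ := ∑ d : ZMod L × ZMod L, ind (D d) * (1 / ((width D d : ℝ) * height D d)) with hX
  set S₂ : ℝ := ∑ r, rowNum D r ^ 2 with hS₂
  have hS₂0 : 0 ≤ S₂ := Finset.sum_nonneg fun _ _ => sq_nonneg _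
  have hn0 := num_nonneg D
  have hrate : ∑ d, rate D d = X / load D := by
    rw [hX, Finset.sum_div]
    refine Finset.sum_congr rfl fun d _ => ?_
    unfold rate
    rw [mul_one_div, div_div]
  -- three lower bounds on the unnormalised total rate
  have hXn : num D / l ^ 2 ≤ X := by
    rw [hX, num, Finset.sum_div]
    refine Finset.sum_le_sum fun d _ => ?_
    by_cases hd : D d = 1
    · rw [hd, ind_one, one_mul]
      have hw : (0 : ℝ) < width D d := by exact_mod_cast width_pos hd
      have ht : (0 : ℝ) < height D d := by exact_mod_cast height_pos hd
      have hw' : (width D d : ℝ) ≤ l := Nat.cast_le.2 (width_le hd)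
      have ht' : (height D d : ℝ) ≤ l := Nat.cast_le.2 (height_le hd)
      apply one_div_le_one_div_of_le (mul_pos hw ht)
      rw [pow_two]
      exact mul_le_mul hw' ht' ht.le hl0.le
    · rw [(eq_one_or _).resolve_left hd, ind_zero]; simp
  have hXS : S₂ / l ^ 2 ≤ X := by
    rw [hX, hS₂, Finset.sum_div, Fintype.sum_prod_type]
    refine Finset.sum_le_sum fun r _ => ?_
    set s : ℝ := rowNum D r / l with hs
    have hs0 : 0 ≤ s := div_nonneg (rowNum_nonneg D r) hl0.le
    have hterm : ∀ c, (2 * s * ind (D (r, c)) - s ^ 2 * (ind (D (r, c)) * width D (r, c))) / l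
        ≤ ind (D (r, c)) * (1 / ((width D (r, c) : ℝ) * height D (r, c))) := by
      intro c
      by_cases hd : D (r, c) = 1
      · rw [hd, ind_one, one_mul, one_mul, mul_one]
        have hw : (0 : ℝ) < width D (r, c) := by exact_mod_cast width_pos hd
        have ht : (0 : ℝ) < height D (r, c) := by exact_mod_cast height_pos hd
        have ht' : (height D (r, c) : ℝ) ≤ l := Nat.cast_le.2 (height_le hd)
        calc (2 * s - s ^ 2 * width D (r, c)) / l ≤ (1 / (width D (r, c) : ℝ)) / l := by
              refine div_le_div_of_nonneg_right ?_ hl0.le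
              rw [le_div_iff₀ hw]
              nlinarith [sq_nonneg (s * width D (r, c) - 1)]
          _ = 1 / ((width D (r, c) : ℝ) * l) := by rw [div_div]
          _ ≤ _ := one_div_le_one_div_of_le (mul_pos hw ht)
              (mul_le_mul_of_nonneg_left ht' hw.le)
      · rw [(eq_one_or _).resolve_left hd, ind_zero]; simp
    refine le_trans ?_ (Finset.sum_le_sum fun c _ => hterm c)
    rw [← Finset.sum_div, Finset.sum_sub_distrib, ← Finset.mul_sum, ← Finset.mul_sum]
    have h1 := sum_width_le D r
    have h2 : s ^ 2 * ∑ c, ind (D (r, c)) * (width D (r, c) : ℝ) ≤ s ^ 2 * l :=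
      mul_le_mul_of_nonneg_left h1 (sq_nonneg _)
    have h3 : (∑ c, ind (D (r, c))) = s * l := by rw [hs, div_mul_cancel₀ _ hl0.ne']; rfl
    rw [h3]
    have h4 : rowNum D r ^ 2 / l ^ 2 = (s ^ 2 * l) / l := by
      rw [hs, mul_div_cancel_right₀ _ hl0.ne', div_pow]
    rw [h4]
    refine div_le_div_of_nonneg_right ?_ hl0.le
    nlinarith
  have hXc : num D ^ 3 / l ^ 4 ≤ X := by
    set s : ℝ := num D / l ^ 2 with hs
    have hs0 : 0 ≤ s := div_nonneg hn0 (by positivity)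
    have hterm : ∀ d : ZMod L × ZMod L, 3 * s ^ 2 * ind (D d)
          - s ^ 3 * (ind (D d) * width D d + ind (D d) * height D d)
        ≤ ind (D d) * (1 / ((width D d : ℝ) * height D d)) := by
      intro d
      by_cases hd : D d = 1
      · rw [hd, ind_one, one_mul, one_mul, one_mul, mul_one]
        exact inv_mul_ge hs0 (by exact_mod_cast width_pos hd) (by exact_mod_cast height_pos hd)
      · rw [(eq_one_or _).resolve_left hd, ind_zero]; simp
    refine le_trans ?_ (Finset.sum_le_sum fun d _ => hterm d)
    rw [Finset.sum_sub_distrib, ← Finset.mul_sum, ← Finset.mul_sum, Finset.sum_add_distrib]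
    have h1 : ∑ d : ZMod L × ZMod L, ind (D d) * (width D d : ℝ) ≤ l ^ 2 := by
      rw [Fintype.sum_prod_type]
      calc _ ≤ ∑ _r : ZMod L, l := Finset.sum_le_sum fun r _ => sum_width_le D r
        _ = l ^ 2 := by rw [sum_const_torus]; ring
    have h2 : ∑ d : ZMod L × ZMod L, ind (D d) * (height D d : ℝ) ≤ l ^ 2 := by
      rw [Fintype.sum_prod_type_right]
      calc _ ≤ ∑ _r : ZMod L, l := Finset.sum_le_sum fun r _ => sum_height_le D r
        _ = l ^ 2 := by rw [sum_const_torus]; ring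
    have h3 : (∑ d, ind (D d)) = s * l ^ 2 := by
      rw [hs, div_mul_cancel₀ _ (by positivity)]; rfl
    rw [h3]
    have h4 : num D ^ 3 / l ^ 4 = s ^ 3 * l ^ 2 := by
      rw [hs]; field_simp
    rw [h4]
    have h5 := mul_le_mul_of_nonneg_left (add_le_add h1 h2) (pow_nonneg hs0 3)
    nlinarith
  have hX0 : 0 ≤ X := le_trans (by positivity) hXn
  set q : ℝ := Real.sqrt l with hq
  have hq2 : q ^ 2 = l := Real.sq_sqrt hl0.le
  have hq0 : 0 < q := Real.sqrt_pos.2 hl0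
  have hq1 : 1 ≤ q := Real.one_le_sqrt.2 hl1
  have hS₂n : S₂ ≤ num D * l := by
    rw [hS₂, ← sum_rowNum, Finset.sum_mul]
    refine Finset.sum_le_sum fun r _ => ?_
    nlinarith [rowNum_nonneg D r, rowNum_le D r]
  have hprod : num D * S₂ / (l ^ 3 * q) ≤ X := by
    refine (sq_le_sq₀ (by positivity) hX0).1 ?_
    calc (num D * S₂ / (l ^ 3 * q)) ^ 2 = num D ^ 2 * S₂ * S₂ / l ^ 7 := by
          rw [div_pow, mul_pow (l ^ 3), hq2]; ring
      _ ≤ num D ^ 2 * S₂ * (num D * l) / l ^ 7 := by gcongr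
      _ = S₂ / l ^ 2 * (num D ^ 3 / l ^ 4) := by field_simp
      _ ≤ X * X := mul_le_mul hXS hXc (by positivity) hX0
      _ = X ^ 2 := by ring
  have hload : load D ≤ 2 * S₂ + 98 * l := by
    calc load D ≤ ∑ r, (2 * rowNum D r ^ 2 + 98) :=
          Finset.sum_le_sum fun r _ => by nlinarith [sq_nonneg (rowNum D r - 7)]
      _ = 2 * S₂ + 98 * l := by
          rw [Finset.sum_add_distrib, ← Finset.mul_sum, sum_const_torus]; ring
  rw [hrate, le_div_iff₀ (load_pos D)]
  have hlin : num D * l / (l ^ 3 * q) ≤ X := by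
    calc num D * l / (l ^ 3 * q) = num D / l ^ 2 / q := by field_simp
      _ ≤ num D / l ^ 2 := div_le_self (by positivity) hq1
      _ ≤ X := hXn
  calc num D / (100 * (l ^ 3 * q)) * load D
      ≤ num D / (100 * (l ^ 3 * q)) * (2 * S₂ + 98 * l) :=
        mul_le_mul_of_nonneg_left hload (by positivity)
    _ = (2 * (num D * S₂ / (l ^ 3 * q)) + 98 * (num D * l / (l ^ 3 * q))) / 100 := by
        field_simp
    _ ≤ X := by linarith

/-! ### Comparison of the rectangle chain with the single flip chain -/

/-- The harmonic sum of length `L`. -/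
def harm (L : ℕ) : ℝ := ∑ i ∈ Finset.range L, 1 / ((i : ℝ) + 1)

lemma sum_range_cast (g : ZMod L → ℝ) : ∑ i ∈ Finset.range L, g i = ∑ x, g x := by
  refine Finset.sum_nbij' (fun i : ℕ => (i : ZMod L)) (fun x => x.val) (fun _ _ => by simp)
    (fun x _ => Finset.mem_range.2 (ZMod.val_lt x)) (fun i hi => ?_) (fun x _ => ?_) (fun _ _ => rfl)
  · exact ZMod.val_cast_of_lt (Finset.mem_range.1 hi)
  · exact ZMod.natCast_zmod_val x

lemma sum_range_add_cast (g : ZMod L → ℝ) (a : ZMod L) :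
    ∑ i ∈ Finset.range L, g (a + i) = ∑ x, g x := by
  rw [sum_range_cast fun x => g (a + x)]
  exact Equiv.sum_comp (Equiv.addLeft a) g

lemma sum_range_sub_cast (g : ZMod L → ℝ) (a : ZMod L) :
    ∑ i ∈ Finset.range L, g (a - i) = ∑ x, g x := by
  rw [sum_range_cast fun x => g (a - x)]
  exact Equiv.sum_comp (Equiv.subLeft a) g

lemma sum_even_le {F G : Defects L → ℝ} (h : ∀ D, Even D → F D ≤ G D) (hG : ∀ D, 0 ≤ G D) :
    ∑ D with Even D, F D ≤ ∑ D, G D :=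
  (Finset.sum_le_sum fun D hD => h D (Finset.mem_filter.1 hD).2).trans
    (Finset.sum_le_sum_of_subset_of_nonneg (Finset.filter_subset _ _) fun D _ _ => hG D)

lemma rate_eq {D : Defects L} {d : ZMod L × ZMod L} (h : D d = 1) :
    rate D d = 1 / (width D d * height D d * load D) := by rw [rate, h, ind_one]

lemma rate_eq_zero {D : Defects L} {d : ZMod L × ZMod L} (h : D d ≠ 1) : rate D d = 0 := by
  rw [rate, (eq_one_or _).resolve_left h, ind_zero, zero_div]

/-- The contribution of the fields reached by a rectangle move. -/
lemma sum_rate_target_le {β : ℝ} (hL : (L : ℝ) ^ 2 * Real.exp (-2 * β) ≤ 1)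
    {f : Defects L → ℝ} (hf : f 0 = 0) :
    ∑ D with Even D, ∑ d, wt β D * rate D d * f (target D d) ^ 2
      ≤ harm L * Real.exp (-2 * β) * ∑ D, wt β D * num D * f D ^ 2 := by
  set G : ZMod L × ZMod L → ZMod L → ℕ → Defects L → ℝ := fun d c' i S =>
    1 / (49 * L * ((i : ℝ) + 1)) * (wt β S *
      (Real.exp (-2 * β) * ind (S (d.1 + (i + 1), c')) + Real.exp (-4 * β)) * f S ^ 2) with hG
  have hG0 : ∀ d c' i S, 0 ≤ G d c' i S := fun d c' i S =>
    mul_nonneg (by positivity) (mul_nonneg (mul_nonneg (wt_pos _ _).le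
      (add_nonneg (mul_nonneg (Real.exp_pos _).le (ind_nonneg _)) (Real.exp_pos _).le)) (sq_nonneg _))
  have hl := size_pos (L := L)
  have hpoint : ∀ D : Defects L, Even D → ∑ d, wt β D * rate D d * f (target D d) ^ 2
      ≤ ∑ d : ZMod L × ZMod L, ∑ c', ∑ i ∈ Finset.range L,
        G d c' i (D + rect d.1 d.2 (d.1 + (i + 1)) c') := by
    intro D hD
    refine Finset.sum_le_sum fun d _ => ?_
    by_cases hd : D d = 1
    swap
    · rw [rate_eq_zero hd, mul_zero, zero_mul]
      exact Finset.sum_nonneg fun c' _ => Finset.sum_nonneg fun i _ => hG0 _ _ _ _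
    obtain ⟨i, hi⟩ : ∃ i, height D d = i + 1 := Nat.exists_eq_succ_of_ne_zero (height_pos hd).ne'
    have hiL : i < L := by have := height_le hd; omega
    have hht : ((height D d : ℕ) : ZMod L) = i + 1 := by rw [hi]; push_cast; rfl
    refine le_trans ?_ (Finset.single_le_sum
      (fun c' _ => Finset.sum_nonneg fun i _ => hG0 d c' i _) (Finset.mem_univ (d.2 + width D d)))
    refine le_trans ?_ (Finset.single_le_sum
      (fun i _ => hG0 d (d.2 + width D d) i _) (Finset.mem_range.2 hiL))
    have hS : target D d = D + rect d.1 d.2 (d.1 + (i + 1)) (d.2 + width D d) := by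
      rw [target, hht]
    rw [← hS]
    have hcc := add_gap_ne (hD.1 d.1) hd
    have hrr := add_gap_ne (hD.2 d.2) hd
    have hwt := wt_le_rect (β := β) (D := D) (r := d.1) (c := d.2) (r' := d.1 + height D d)
      (c' := d.2 + width D d) hcc hrr hd (gap_spec (a := fun c => D (d.1, c)) hd).2
      (gap_spec (a := fun r => D (r, d.2)) hd).2 (target D d) rfl
    rw [hht] at hwt
    have hrate : rate D d ≤ 1 / (49 * L * ((i : ℝ) + 1)) := by
      rw [rate_eq hd]
      refine one_div_le_one_div_of_le (by positivity) ?_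
      have hw : (1 : ℝ) ≤ width D d := by exact_mod_cast width_pos hd
      have hh : (height D d : ℝ) = i + 1 := by rw [hi]; push_cast; rfl
      have h0 : (0 : ℝ) ≤ i + 1 := by positivity
      rw [hh]
      calc 49 * (L : ℝ) * (i + 1) ≤ load D * (i + 1) := mul_le_mul_of_nonneg_right (load_ge D) h0
        _ = 1 * (i + 1) * load D := by ring
        _ ≤ _ := mul_le_mul_of_nonneg_right (mul_le_mul_of_nonneg_right hw h0) (load_pos D).le
    rw [hG]
    calc wt β D * rate D d * f (target D d) ^ 2
        = rate D d * (wt β D * f (target D d) ^ 2) := by ring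
      _ ≤ 1 / (49 * L * ((i : ℝ) + 1)) * (wt β D * f (target D d) ^ 2) :=
          mul_le_mul_of_nonneg_right hrate (mul_nonneg (wt_pos _ _).le (sq_nonneg _))
      _ ≤ _ := by
          refine mul_le_mul_of_nonneg_left ?_ (by positivity)
          exact mul_le_mul_of_nonneg_right hwt (sq_nonneg _)
  refine (sum_even_le hpoint fun D => Finset.sum_nonneg fun d _ => Finset.sum_nonneg fun c' _ =>
    Finset.sum_nonneg fun i _ => hG0 _ _ _ _).trans ?_
  have hswap : ∑ D : Defects L, ∑ d : ZMod L × ZMod L, ∑ c', ∑ i ∈ Finset.range L,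
        G d c' i (D + rect d.1 d.2 (d.1 + (i + 1)) c')
      = ∑ S : Defects L, ∑ i ∈ Finset.range L, ∑ d : ZMod L × ZMod L, ∑ c', G d c' i S := by
    calc _ = ∑ d : ZMod L × ZMod L, ∑ c', ∑ i ∈ Finset.range L, ∑ D : Defects L,
          G d c' i (D + rect d.1 d.2 (d.1 + (i + 1)) c') := by
          rw [Finset.sum_comm]
          refine Finset.sum_congr rfl fun d _ => ?_
          rw [Finset.sum_comm]
          refine Finset.sum_congr rfl fun c' _ => ?_
          rw [Finset.sum_comm]
      _ = ∑ d : ZMod L × ZMod L, ∑ c', ∑ i ∈ Finset.range L, ∑ S : Defects L, G d c' i S :=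
          Finset.sum_congr rfl fun d _ => Finset.sum_congr rfl fun c' _ =>
            Finset.sum_congr rfl fun i _ => Equiv.sum_comp (Equiv.addRight _) (G d c' i)
      _ = ∑ d : ZMod L × ZMod L, ∑ S : Defects L, ∑ i ∈ Finset.range L, ∑ c', G d c' i S := by
          refine Finset.sum_congr rfl fun d _ => ?_
          rw [Finset.sum_comm, Finset.sum_comm (s := (Finset.univ : Finset (Defects L)))]
          refine Finset.sum_congr rfl fun i _ => ?_
          rw [Finset.sum_comm]
      _ = _ := by
          rw [Finset.sum_comm]
          refine Finset.sum_congr rfl fun S _ => ?_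
          rw [Finset.sum_comm]
  rw [hswap, Finset.mul_sum]
  refine Finset.sum_le_sum fun S _ => ?_
  by_cases hS0 : S = 0
  · subst hS0
    simp [hG, hf]
  have hn := one_le_num hS0
  have hinner : ∀ i : ℕ, ∑ d : ZMod L × ZMod L, ∑ c', G d c' i S
      = 1 / ((i : ℝ) + 1) * (wt β S * f S ^ 2 *
        (Real.exp (-2 * β) * num S + L ^ 2 * Real.exp (-4 * β)) / 49) := by
    intro i
    have h1 : ∀ d : ZMod L × ZMod L, ∑ c', G d c' i S = 1 / (49 * L * ((i : ℝ) + 1)) *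
        (wt β S * f S ^ 2) * (Real.exp (-2 * β) * rowNum S (d.1 + (i + 1)) + L * Real.exp (-4 * β)) := by
      intro d
      rw [rowNum, Finset.mul_sum, ← sum_const_torus, ← Finset.sum_add_distrib, Finset.mul_sum]
      exact Finset.sum_congr rfl fun c' _ => by rw [hG]; ring
    rw [Finset.sum_congr rfl fun d _ => h1 d, ← Finset.mul_sum, Finset.sum_add_distrib,
      ← Finset.mul_sum, Fintype.sum_prod_type]
    have h2 : ∑ r : ZMod L, ∑ _c : ZMod L, rowNum S (r + (i + 1)) = L * num S := by
      rw [← sum_rowNum S, ← Equiv.sum_comp (Equiv.addRight ((i : ZMod L) + 1)) (rowNum S),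
        Finset.mul_sum]
      exact Finset.sum_congr rfl fun r _ => sum_const_torus _
    rw [h2, Fintype.sum_prod_type, sum_const_torus, sum_const_torus]
    have : (L : ℝ) ≠ 0 := by positivity
    have : (i : ℝ) + 1 ≠ 0 := by positivity
    field_simp
  rw [Finset.sum_congr rfl fun i _ => hinner i, ← Finset.sum_mul]
  have hh0 : 0 ≤ harm L := Finset.sum_nonneg fun i _ => by positivity
  have he : Real.exp (-4 * β) = Real.exp (-2 * β) * Real.exp (-2 * β) := by
    rw [← Real.exp_add]; congr 1; ring
  have hb : (Real.exp (-2 * β) * num S + L ^ 2 * Real.exp (-4 * β)) / 49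
      ≤ Real.exp (-2 * β) * num S := by
    have e0 := Real.exp_pos (-2 * β)
    have h3 : (L : ℝ) ^ 2 * Real.exp (-4 * β) ≤ Real.exp (-2 * β) * num S := by
      rw [he]
      calc (L : ℝ) ^ 2 * (Real.exp (-2 * β) * Real.exp (-2 * β))
          = Real.exp (-2 * β) * ((L : ℝ) ^ 2 * Real.exp (-2 * β)) := by ring
        _ ≤ Real.exp (-2 * β) * num S := mul_le_mul_of_nonneg_left (hL.trans hn) e0.le
    have h4 : 0 ≤ Real.exp (-2 * β) * num S := by positivity
    linarith
  calc _ = harm L * (wt β S * f S ^ 2 *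
        ((Real.exp (-2 * β) * num S + L ^ 2 * Real.exp (-4 * β)) / 49)) := by rw [harm]; ring
    _ ≤ harm L * (wt β S * f S ^ 2 * (Real.exp (-2 * β) * num S)) := by
        refine mul_le_mul_of_nonneg_left (mul_le_mul_of_nonneg_left hb ?_) hh0
        exact mul_nonneg (wt_pos _ _).le (sq_nonneg _)
    _ = _ := by ring

lemma sub_target_eq_sum {L : ℕ} (f : Defects L → ℝ) (D : Defects L) (r c : ZMod L) (t w : ℕ) :
    f (D + rect r c (r + t) (c + w)) - f D = ∑ i ∈ Finset.range t, ∑ j ∈ Finset.range w,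
      (f (toggle (r + i, c + j) (D + sweep r c (c + w) (r + i) (c + j)))
        - f (D + sweep r c (c + w) (r + i) (c + j))) := by
  have hrow : ∀ i : ℕ, ∑ j ∈ Finset.range w,
      (f (toggle (r + i, c + j) (D + sweep r c (c + w) (r + i) (c + j)))
        - f (D + sweep r c (c + w) (r + i) (c + j)))
      = f (D + sweep r c (c + w) (r + (i + 1 : ℕ)) c) - f (D + sweep r c (c + w) (r + i) c) := by
    intro i
    have h1 : ∀ j : ℕ, toggle (r + (i : ZMod L), c + (j : ZMod L)) (D + sweep r c (c + w) (r + i) (c + j))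
        = D + sweep r c (c + w) (r + i) (c + (j + 1 : ℕ)) := by
      intro j
      rw [toggle, add_assoc, ← sweep_succ, Nat.cast_succ, add_assoc c]
    simp only [h1]
    rw [Finset.sum_range_sub fun j : ℕ => f (D + sweep r c (c + w) (r + i) (c + j)), Nat.cast_zero,
      add_zero, sweep_row_end, Nat.cast_succ, add_assoc r]
  simp only [hrow]
  rw [Finset.sum_range_sub fun i : ℕ => f (D + sweep r c (c + w) (r + i) c), Nat.cast_zero,
    add_zero, sweep_start, add_zero, sweep_row_start]

/-- The weight of the moving edges with ends in the columns `c` and `c'` across the rows `ρ` and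
`ρ + 1`. -/
def flow (β : ℝ) (S : Defects L) (ρ c c' : ZMod L) : ℝ :=
  wt β S * Real.exp (2 * β) *
    ((ind (S (ρ, c')) + Real.exp (-2 * β)) / (rowNum S ρ + 1) *
      ((ind (S (ρ + 1, c)) + Real.exp (-2 * β)) / (rowNum S (ρ + 1) + 1)))

lemma flow_nonneg (β : ℝ) (S : Defects L) (ρ c c' : ZMod L) : 0 ≤ flow β S ρ c c' := by
  have h : ∀ a ρ, 0 ≤ (ind a + Real.exp (-2 * β)) / (rowNum S ρ + 1) := fun a ρ =>
    div_nonneg (add_nonneg (ind_nonneg _) (Real.exp_pos _).le)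
      (add_nonneg (rowNum_nonneg S ρ) zero_le_one)
  exact mul_nonneg (mul_nonneg (wt_pos _ _).le (Real.exp_pos _).le) (mul_nonneg (h _ _) (h _ _))

lemma sum_flow_le {β : ℝ} (hL : (L : ℝ) * Real.exp (-2 * β) ≤ 1) (S : Defects L) (ρ : ZMod L) :
    ∑ c, ∑ c', flow β S ρ c c' ≤ wt β S * Real.exp (2 * β) := by
  have h : ∀ ρ, ∑ c, (ind (S (ρ, c)) + Real.exp (-2 * β)) / (rowNum S ρ + 1) ≤ 1 := by
    intro ρ
    rw [← Finset.sum_div, Finset.sum_add_distrib, sum_const_torus]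
    refine div_le_one_of_le₀ ?_ (add_nonneg (rowNum_nonneg S ρ) zero_le_one)
    exact add_le_add le_rfl hL
  have h0 : ∀ ρ, 0 ≤ ∑ c, (ind (S (ρ, c)) + Real.exp (-2 * β)) / (rowNum S ρ + 1) := fun ρ =>
    Finset.sum_nonneg fun c _ => div_nonneg (add_nonneg (ind_nonneg _) (Real.exp_pos _).le)
      (add_nonneg (rowNum_nonneg S ρ) zero_le_one)
  calc ∑ c, ∑ c', flow β S ρ c c' = wt β S * Real.exp (2 * β) *
        ((∑ c', (ind (S (ρ, c')) + Real.exp (-2 * β)) / (rowNum S ρ + 1)) *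
          ∑ c, (ind (S (ρ + 1, c)) + Real.exp (-2 * β)) / (rowNum S (ρ + 1) + 1)) := by
        rw [Finset.sum_comm, Finset.sum_mul_sum, Finset.mul_sum]
        refine Finset.sum_congr rfl fun c' _ => ?_
        rw [Finset.mul_sum]
        rfl
    _ ≤ wt β S * Real.exp (2 * β) * 1 := by
        refine mul_le_mul_of_nonneg_left ?_ (mul_nonneg (wt_pos _ _).le (Real.exp_pos _).le)
        exact mul_le_one₀ (h ρ) (h0 (ρ + 1)) (h (ρ + 1))
    _ = _ := mul_one _

/-- The weight of a field is dominated by the flow through the fields along a sweep. -/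
lemma wt_div_le_flow {β : ℝ} (hβ : 0 ≤ β) {D : Defects L} {r c c' : ZMod L} (hcc : c' ≠ c)
    (h1 : D (r, c) = 1) (h2 : D (r, c') = 1) (ρ κ : ZMod L) :
    wt β D / ((rowNum D ρ + 7) * (rowNum D (ρ + 1) + 7))
      ≤ flow β (D + sweep r c c' ρ κ) ρ c c' := by
  have hw := wt_le_sweep hβ hcc h1 h2 ρ κ _ rfl
  set S := D + sweep r c c' ρ κ with hS
  have e1 : rowNum S ρ + 1 ≤ rowNum D ρ + 7 := by linarith [rowNum_sweep_le D r c c' ρ κ ρ]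
  have e2 : rowNum S (ρ + 1) + 1 ≤ rowNum D (ρ + 1) + 7 := by
    linarith [rowNum_sweep_le D r c c' ρ κ (ρ + 1)]
  have p1 : 0 < rowNum S ρ + 1 := by linarith [rowNum_nonneg S ρ]
  have p2 : 0 < rowNum S (ρ + 1) + 1 := by linarith [rowNum_nonneg S (ρ + 1)]
  calc wt β D / ((rowNum D ρ + 7) * (rowNum D (ρ + 1) + 7))
      ≤ wt β D / ((rowNum S ρ + 1) * (rowNum S (ρ + 1) + 1)) :=
        div_le_div_of_nonneg_left (wt_pos _ _).le (mul_pos p1 p2)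
          (mul_le_mul e1 e2 p2.le (p1.le.trans e1))
    _ ≤ _ := div_le_div_of_nonneg_right hw (mul_pos p1 p2).le
    _ = _ := by rw [flow]; field_simp

/-- The Cauchy-Schwarz inequality along the canonical path of a rectangle move. -/
lemma rate_mul_sub_target_sq_le (f : Defects L → ℝ) {D : Defects L} {d : ZMod L × ZMod L}
    (hd : D d = 1) :
    rate D d * (f (target D d) - f D) ^ 2
      ≤ ∑ i ∈ Finset.range (height D d), ∑ j ∈ Finset.range (width D d), 1 / ((i : ℝ) + 1) *
        (1 / ((rowNum D (d.1 + i) + 7) * (rowNum D (d.1 + i + 1) + 7)) *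
        (f (toggle (d.1 + i, d.2 + j) (D + sweep d.1 d.2 (d.2 + width D d) (d.1 + i) (d.2 + j)))
          - f (D + sweep d.1 d.2 (d.2 + width D d) (d.1 + i) (d.2 + j))) ^ 2) := by
  set w := width D d with hw
  set t := height D d with ht
  set a : ℕ → ℕ → ℝ := fun i j =>
    f (toggle (d.1 + i, d.2 + j) (D + sweep d.1 d.2 (d.2 + w) (d.1 + i) (d.2 + j)))
      - f (D + sweep d.1 d.2 (d.2 + w) (d.1 + i) (d.2 + j)) with ha
  set μ : ℕ → ℝ := fun i => (rowNum D (d.1 + i) + 7) * (rowNum D (d.1 + i + 1) + 7) with hμ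
  have hμ0 : ∀ i, 0 < μ i := fun i => mul_pos (by linarith [rowNum_nonneg D (d.1 + i)])
    (by linarith [rowNum_nonneg D (d.1 + i + 1)])
  have hw0 : (0 : ℝ) < w := by exact_mod_cast width_pos hd
  have ht0 : (0 : ℝ) < t := by exact_mod_cast height_pos hd
  have htL : t ≤ L := height_le hd
  have hlo := load_pos D
  have htel : f (target D d) - f D = ∑ q ∈ Finset.range t ×ˢ Finset.range w, a q.1 q.2 := by
    rw [Finset.sum_product]
    exact sub_target_eq_sum f D d.1 d.2 t w
  have hcs : (∑ q ∈ Finset.range t ×ˢ Finset.range w, a q.1 q.2) ^ 2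
      ≤ (∑ q ∈ Finset.range t ×ˢ Finset.range w, μ q.1) *
        ∑ q ∈ Finset.range t ×ˢ Finset.range w, 1 / μ q.1 * a q.1 q.2 ^ 2 := by
    refine Finset.sum_sq_le_sum_mul_sum_of_sq_le_mul _ (fun q _ => (hμ0 _).le)
      (fun q _ => mul_nonneg (one_div_nonneg.2 (hμ0 _).le) (sq_nonneg _)) fun q _ => ?_
    rw [← mul_assoc, mul_one_div_cancel (hμ0 q.1).ne', one_mul]
  have hμs : ∑ q ∈ Finset.range t ×ˢ Finset.range w, μ q.1 ≤ w * load D := by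
    rw [Finset.sum_product]
    simp only [Finset.sum_const, Finset.card_range, nsmul_eq_mul]
    rw [← Finset.mul_sum]
    refine mul_le_mul_of_nonneg_left ?_ hw0.le
    have e1 : ∀ ρ : ZMod L, ∑ i ∈ Finset.range L, (rowNum D (ρ + i) + 7) ^ 2 = load D :=
      fun ρ => sum_range_add_cast (fun ρ => (rowNum D ρ + 7) ^ 2) ρ
    calc ∑ i ∈ Finset.range t, μ i ≤ ∑ i ∈ Finset.range L, μ i :=
          Finset.sum_le_sum_of_subset_of_nonneg (Finset.range_mono htL) fun i _ _ => (hμ0 i).le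
      _ ≤ ∑ i ∈ Finset.range L, ((rowNum D (d.1 + i) + 7) ^ 2 / 2
            + (rowNum D (d.1 + 1 + i) + 7) ^ 2 / 2) := by
          refine Finset.sum_le_sum fun i _ => ?_
          rw [hμ, add_right_comm d.1 1]
          nlinarith [sq_nonneg (rowNum D (d.1 + i) - rowNum D (d.1 + i + 1))]
      _ = load D := by
          rw [Finset.sum_add_distrib, ← Finset.sum_div, ← Finset.sum_div, e1, e1]; ring
  have hA0 : 0 ≤ ∑ q ∈ Finset.range t ×ˢ Finset.range w, 1 / μ q.1 * a q.1 q.2 ^ 2 :=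
    Finset.sum_nonneg fun q _ => mul_nonneg (one_div_nonneg.2 (hμ0 _).le) (sq_nonneg _)
  calc rate D d * (f (target D d) - f D) ^ 2
      ≤ rate D d * ((w * load D) *
        ∑ q ∈ Finset.range t ×ˢ Finset.range w, 1 / μ q.1 * a q.1 q.2 ^ 2) := by
        rw [htel]
        exact mul_le_mul_of_nonneg_left (hcs.trans (mul_le_mul_of_nonneg_right hμs hA0))
          (rate_nonneg D d)
    _ = 1 / t * ∑ q ∈ Finset.range t ×ˢ Finset.range w, 1 / μ q.1 * a q.1 q.2 ^ 2 := by
        rw [rate_eq hd, ← hw, ← ht]; field_simp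
    _ ≤ ∑ q ∈ Finset.range t ×ˢ Finset.range w, 1 / ((q.1 : ℝ) + 1) *
          (1 / μ q.1 * a q.1 q.2 ^ 2) := by
        rw [Finset.mul_sum]
        refine Finset.sum_le_sum fun q hq => ?_
        refine mul_le_mul_of_nonneg_right ?_
          (mul_nonneg (one_div_nonneg.2 (hμ0 _).le) (sq_nonneg _))
        refine one_div_le_one_div_of_le (by positivity) ?_
        have := Finset.mem_range.1 (Finset.mem_product.1 hq).1
        exact_mod_cast this
    _ = _ := Finset.sum_product _ _ _

/-- The Dirichlet form of the rectangle chain is dominated by that of the flip chain. -/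
lemma sum_rate_sub_target_le {β : ℝ} (hβ : 0 ≤ β) (hL : (L : ℝ) * Real.exp (-2 * β) ≤ 1)
    (f : Defects L → ℝ) :
    ∑ D with Even D, ∑ d, wt β D * rate D d * (f (target D d) - f D) ^ 2
      ≤ harm L * Real.exp (2 * β) * ReversibleChain.energy toggle (wt β) f f := by
  set M : ZMod L × ZMod L → ZMod L → ZMod L → Defects L → ℝ := fun x c c' S =>
    min (flow β S x.1 c c') (flow β (toggle x S) x.1 c c') with hM
  have hM0 : ∀ x c c' S, 0 ≤ M x c c' S := fun x c c' S =>
    le_min (flow_nonneg _ _ _ _ _) (flow_nonneg _ _ _ _ _)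
  set F : ℕ → ZMod L → ZMod L × ZMod L → ZMod L → Defects L → ℝ := fun i c x c' S =>
    1 / ((i : ℝ) + 1) * (M x c c' S * (f (toggle x S) - f S) ^ 2) with hF
  have hF0 : ∀ i c x c' S, 0 ≤ F i c x c' S := fun i c x c' S =>
    mul_nonneg (by positivity) (mul_nonneg (hM0 _ _ _ _) (sq_nonneg _))
  have hpoint : ∀ D : Defects L, Even D →
      ∑ d, wt β D * rate D d * (f (target D d) - f D) ^ 2
      ≤ ∑ d : ZMod L × ZMod L, ∑ c', ∑ i ∈ Finset.range L, ∑ j ∈ Finset.range L,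
        F i d.2 (d.1 + i, d.2 + j) c' (D + sweep d.1 d.2 c' (d.1 + i) (d.2 + j)) := by
    intro D hD
    refine Finset.sum_le_sum fun d _ => ?_
    by_cases hd : D d = 1
    swap
    · rw [rate_eq_zero hd, mul_zero, zero_mul]
      exact Finset.sum_nonneg fun c' _ => Finset.sum_nonneg fun i _ => Finset.sum_nonneg fun j _ =>
        hF0 _ _ _ _ _
    have hcc : d.2 + width D d ≠ d.2 := add_gap_ne (hD.1 d.1) hd
    have hend : D (d.1, d.2 + width D d) = 1 := (gap_spec (a := fun c => D (d.1, c)) hd).2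
    refine le_trans ?_ (Finset.single_le_sum
      (fun c' _ => Finset.sum_nonneg fun i _ => Finset.sum_nonneg fun j _ => hF0 _ _ _ _ _)
      (Finset.mem_univ (d.2 + width D d)))
    rw [mul_assoc]
    refine (mul_le_mul_of_nonneg_left (rate_mul_sub_target_sq_le f hd) (wt_pos β D).le).trans ?_
    rw [Finset.mul_sum]
    refine le_trans ?_ (Finset.sum_le_sum_of_subset_of_nonneg
      (Finset.range_mono (height_le hd)) fun i _ _ => Finset.sum_nonneg fun j _ => hF0 _ _ _ _ _)
    refine Finset.sum_le_sum fun i _ => ?_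
    rw [Finset.mul_sum]
    refine le_trans ?_ (Finset.sum_le_sum_of_subset_of_nonneg
      (Finset.range_mono (width_le hd)) fun j _ _ => hF0 _ _ _ _ _)
    refine Finset.sum_le_sum fun j _ => ?_
    set S := D + sweep d.1 d.2 (d.2 + width D d) (d.1 + i) (d.2 + j) with hS
    have hT : toggle (d.1 + (i : ZMod L), d.2 + (j : ZMod L)) S
        = D + sweep d.1 d.2 (d.2 + width D d) (d.1 + i) (d.2 + j + 1) := by
      rw [toggle, hS, add_assoc, ← sweep_succ]
    have hle : wt β D / ((rowNum D (d.1 + i) + 7) * (rowNum D (d.1 + i + 1) + 7))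
        ≤ M (d.1 + i, d.2 + j) d.2 (d.2 + width D d) S := by
      refine le_min (wt_div_le_flow hβ hcc hd hend _ _) ?_
      rw [hT]
      exact wt_div_le_flow hβ hcc hd hend _ _
    rw [hF]
    calc _ = 1 / ((i : ℝ) + 1) *
          (wt β D / ((rowNum D (d.1 + i) + 7) * (rowNum D (d.1 + i + 1) + 7)) *
            (f (toggle (d.1 + i, d.2 + j) S) - f S) ^ 2) := by ring
      _ ≤ _ := mul_le_mul_of_nonneg_left (mul_le_mul_of_nonneg_right hle (sq_nonneg _))
          (by positivity)
  refine (sum_even_le hpoint fun D => Finset.sum_nonneg fun d _ => Finset.sum_nonneg fun c' _ =>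
    Finset.sum_nonneg fun i _ => Finset.sum_nonneg fun j _ => hF0 _ _ _ _ _).trans ?_
  have hswap : ∑ D : Defects L, ∑ d : ZMod L × ZMod L, ∑ c', ∑ i ∈ Finset.range L,
        ∑ j ∈ Finset.range L,
        F i d.2 (d.1 + i, d.2 + j) c' (D + sweep d.1 d.2 c' (d.1 + i) (d.2 + j))
      = ∑ S : Defects L, ∑ x : ZMod L × ZMod L, ∑ i ∈ Finset.range L, ∑ j ∈ Finset.range L,
        ∑ c', F i (x.2 - j) x c' S := by
    calc _ = ∑ d : ZMod L × ZMod L, ∑ c', ∑ i ∈ Finset.range L, ∑ j ∈ Finset.range L,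
          ∑ D : Defects L,
          F i d.2 (d.1 + i, d.2 + j) c' (D + sweep d.1 d.2 c' (d.1 + i) (d.2 + j)) := by
          rw [Finset.sum_comm]
          refine Finset.sum_congr rfl fun d _ => ?_
          rw [Finset.sum_comm]
          refine Finset.sum_congr rfl fun c' _ => ?_
          rw [Finset.sum_comm]
          refine Finset.sum_congr rfl fun i _ => ?_
          rw [Finset.sum_comm]
      _ = ∑ d : ZMod L × ZMod L, ∑ c', ∑ i ∈ Finset.range L, ∑ j ∈ Finset.range L,
          ∑ S : Defects L, F i d.2 (d.1 + i, d.2 + j) c' S :=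
          Finset.sum_congr rfl fun d _ => Finset.sum_congr rfl fun c' _ =>
            Finset.sum_congr rfl fun i _ => Finset.sum_congr rfl fun j _ =>
              Equiv.sum_comp (Equiv.addRight _) (F i d.2 (d.1 + i, d.2 + j) c')
      _ = ∑ i ∈ Finset.range L, ∑ j ∈ Finset.range L, ∑ d : ZMod L × ZMod L,
          ∑ S : Defects L, ∑ c', F i d.2 (d.1 + i, d.2 + j) c' S := by
          rw [Finset.sum_congr rfl fun d _ => Finset.sum_comm, Finset.sum_comm]
          refine Finset.sum_congr rfl fun i _ => ?_
          rw [Finset.sum_congr rfl fun d _ => Finset.sum_comm, Finset.sum_comm]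
          refine Finset.sum_congr rfl fun j _ => Finset.sum_congr rfl fun d _ => Finset.sum_comm
      _ = ∑ i ∈ Finset.range L, ∑ j ∈ Finset.range L, ∑ x : ZMod L × ZMod L,
          ∑ S : Defects L, ∑ c', F i (x.2 - j) x c' S := by
          refine Finset.sum_congr rfl fun i _ => Finset.sum_congr rfl fun j _ => ?_
          refine Fintype.sum_equiv (Equiv.addRight ((i : ZMod L), (j : ZMod L))) _ _ fun d => ?_
          refine Finset.sum_congr rfl fun S _ => Finset.sum_congr rfl fun c' _ => ?_
          change F i d.2 (d.1 + i, d.2 + j) c' S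
            = F i (d.2 + j - j) (d.1 + i, d.2 + j) c' S
          rw [add_sub_cancel_right]
      _ = _ := by
          rw [Finset.sum_congr rfl fun i _ => Finset.sum_comm, Finset.sum_comm,
            Finset.sum_congr rfl fun x _ => Finset.sum_congr rfl fun i _ => Finset.sum_comm,
            Finset.sum_congr rfl fun x _ => Finset.sum_comm, Finset.sum_comm]
  rw [hswap, ReversibleChain.energy, Finset.mul_sum]
  refine Finset.sum_le_sum fun S _ => ?_
  rw [Finset.mul_sum]
  refine Finset.sum_le_sum fun x _ => ?_
  have hMs : ∑ j ∈ Finset.range L, ∑ c', M x (x.2 - j) c' S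
      ≤ Real.exp (2 * β) * ReversibleChain.cond toggle (wt β) x S := by
    have hle : ∀ S', (∀ c c', M x c c' S ≤ flow β S' x.1 c c') →
        ∑ j ∈ Finset.range L, ∑ c', M x (x.2 - j) c' S ≤ Real.exp (2 * β) * wt β S' := by
      intro S' h
      rw [sum_range_sub_cast fun c => ∑ c', M x c c' S, mul_comm]
      exact (Finset.sum_le_sum fun c _ => Finset.sum_le_sum fun c' _ => h c c').trans
        (sum_flow_le hL S' x.1)
    rw [ReversibleChain.cond, mul_min_of_nonneg _ _ (Real.exp_pos _).le]
    exact le_min (hle S fun _ _ => min_le_left _ _) (hle _ fun _ _ => min_le_right _ _)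
  have hsum : ∑ i ∈ Finset.range L, ∑ j ∈ Finset.range L, ∑ c', F i (x.2 - j) x c' S
      = harm L * ((∑ j ∈ Finset.range L, ∑ c', M x (x.2 - j) c' S) *
        (f (toggle x S) - f S) ^ 2) := by
    rw [harm, Finset.sum_mul]
    refine Finset.sum_congr rfl fun i _ => ?_
    rw [Finset.sum_mul, Finset.mul_sum]
    refine Finset.sum_congr rfl fun j _ => ?_
    rw [Finset.sum_mul, Finset.mul_sum]
  rw [hsum]
  have hh0 : 0 ≤ harm L := Finset.sum_nonneg fun i _ => by positivity
  calc _ ≤ harm L * (Real.exp (2 * β) * ReversibleChain.cond toggle (wt β) x S *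
        (f (toggle x S) - f S) ^ 2) :=
        mul_le_mul_of_nonneg_left (mul_le_mul_of_nonneg_right hMs (sq_nonneg _)) hh0
    _ = _ := by ring

/-! ### The Poincaré inequality at the critical length -/

lemma harm_nonneg (L : ℕ) : 0 ≤ harm L := Finset.sum_nonneg fun i _ => by positivity

lemma harm_le_log (L : ℕ) : harm L ≤ 1 + Real.log L := by
  refine le_trans (le_of_eq ?_) (harmonic_le_one_add_log L)
  rw [harmonic, harm]
  push_cast
  exact Finset.sum_congr rfl fun i _ => one_div _

/-- The fields from which a zero field remains to be reached. -/
def excited (L : ℕ) [NeZero L] : Set (Defects L) := {D | Even D ∧ D ≠ 0}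

lemma sum_num_mul_sq_le {β : ℝ} (hβ : 12800 ≤ β) (hL : (L : ℝ) ≤ Real.exp (β / 2))
    {f : Defects L → ℝ} (hf : ∀ D, D ∉ excited L → f D = 0) :
    ∑ D, wt β D * num D * f D ^ 2
      ≤ 400 * β * Real.exp (3.75 * β) * ReversibleChain.energy toggle (wt β) f f := by
  set q : ℝ := (L : ℝ) ^ 3 * Real.sqrt L with hq
  set A : ℝ := ∑ D, wt β D * num D * f D ^ 2 with hA
  set E : ℝ := ReversibleChain.energy toggle (wt β) f f with hE
  have hE0 : 0 ≤ E := ReversibleChain.energy_nonneg (wt_pos β) f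
  have hl := size_pos (L := L)
  have hl0 : (0 : ℝ) < L := by linarith
  have hq0 : 0 < q := by positivity
  have hA0 : 0 ≤ A := Finset.sum_nonneg fun D _ =>
    mul_nonneg (mul_nonneg (wt_pos _ _).le (num_nonneg _)) (sq_nonneg _)
  have hqle : q ≤ Real.exp (1.75 * β) := by
    have h1 : Real.sqrt L ≤ Real.exp (β / 2 / 2) := by
      rw [Real.exp_half]; exact Real.sqrt_le_sqrt hL
    calc q ≤ Real.exp (β / 2) ^ 3 * Real.exp (β / 2 / 2) :=
          mul_le_mul (pow_le_pow_left₀ hl0.le hL 3) h1 (Real.sqrt_nonneg _) (by positivity)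
      _ = Real.exp (1.75 * β) := by
          rw [← Real.exp_nat_mul, ← Real.exp_add]; congr 1; push_cast; ring
  have hharm : harm L ≤ β := by
    have : Real.log L ≤ β / 2 := (Real.log_le_iff_le_exp hl0).2 hL
    linarith [harm_le_log L]
  have hh0 := harm_nonneg L
  have hL2 : (L : ℝ) ^ 2 * Real.exp (-2 * β) ≤ 1 := by
    calc (L : ℝ) ^ 2 * Real.exp (-2 * β) ≤ Real.exp (β / 2) ^ 2 * Real.exp (-2 * β) := by gcongr
      _ = Real.exp (-β) := by
          rw [← Real.exp_nat_mul, ← Real.exp_add]; congr 1; push_cast; ring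
      _ ≤ 1 := Real.exp_le_one_iff.2 (by linarith)
  have hL1 : (L : ℝ) * Real.exp (-2 * β) ≤ 1 :=
    le_trans (mul_le_mul_of_nonneg_right (by nlinarith) (Real.exp_pos _).le) hL2
  have hsmall : 400 * (harm L * Real.exp (-2 * β)) * q ≤ 1 := by
    have h1 : 400 * β ≤ Real.exp (β / 4) := by
      have := Real.quadratic_le_exp_of_nonneg (x := β / 4) (by linarith)
      nlinarith
    calc 400 * (harm L * Real.exp (-2 * β)) * q
        ≤ 400 * (β * Real.exp (-2 * β)) * Real.exp (1.75 * β) := by gcongr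
      _ = 400 * β * Real.exp (-(β / 4)) := by
          rw [show 400 * (β * Real.exp (-2 * β)) * Real.exp (1.75 * β)
            = 400 * β * (Real.exp (-2 * β) * Real.exp (1.75 * β)) by ring, ← Real.exp_add]
          congr 2; ring
      _ ≤ Real.exp (β / 4) * Real.exp (-(β / 4)) :=
          mul_le_mul_of_nonneg_right h1 (Real.exp_pos _).le
      _ = 1 := by rw [← Real.exp_add, add_neg_cancel, Real.exp_zero]
  have hf0 : f 0 = 0 := hf 0 fun h => h.2 rfl
  have hmain : A / (100 * q) ≤ 2 * (harm L * Real.exp (2 * β) * E)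
      + 2 * (harm L * Real.exp (-2 * β) * A) := by
    have hsupp : A = ∑ D with Even D, wt β D * num D * f D ^ 2 := by
      refine (Finset.sum_filter_of_ne fun D _ h => ?_).symm
      by_contra hne
      exact h (by rw [hf D fun h' => hne h'.1]; ring)
    calc A / (100 * q) = ∑ D with Even D, wt β D * f D ^ 2 * (num D / (100 * q)) := by
          rw [hsupp, Finset.sum_div]
          exact Finset.sum_congr rfl fun D _ => by ring
      _ ≤ ∑ D with Even D, wt β D * f D ^ 2 * ∑ d, rate D d :=
          Finset.sum_le_sum fun D _ => mul_le_mul_of_nonneg_left (sum_rate_ge D)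
            (mul_nonneg (wt_pos _ _).le (sq_nonneg _))
      _ ≤ ∑ D with Even D, (2 * (∑ d, wt β D * rate D d * (f (target D d) - f D) ^ 2)
            + 2 * ∑ d, wt β D * rate D d * f (target D d) ^ 2) := by
          refine Finset.sum_le_sum fun D _ => ?_
          rw [Finset.mul_sum, Finset.mul_sum, Finset.mul_sum, ← Finset.sum_add_distrib]
          refine Finset.sum_le_sum fun d _ => ?_
          have h1 : 0 ≤ wt β D * rate D d := mul_nonneg (wt_pos _ _).le (rate_nonneg _ _)
          have h2 : f D ^ 2 ≤ 2 * (f (target D d) - f D) ^ 2 + 2 * f (target D d) ^ 2 := by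
            nlinarith [sq_nonneg (2 * f (target D d) - f D)]
          nlinarith [mul_le_mul_of_nonneg_left h2 h1]
      _ ≤ _ := by
          rw [Finset.sum_add_distrib, ← Finset.mul_sum, ← Finset.mul_sum]
          have h1 := sum_rate_sub_target_le (by linarith : 0 ≤ β) hL1 f
          have h2 := sum_rate_target_le hL2 hf0
          linarith
  have h1 : 2 * (harm L * Real.exp (-2 * β) * A) ≤ A / (200 * q) := by
    rw [le_div_iff₀ (by positivity)]
    nlinarith [mul_le_mul_of_nonneg_right hsmall hA0]
  have h2 : A / (200 * q) ≤ 2 * (harm L * Real.exp (2 * β) * E) := by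
    have : A / (100 * q) = 2 * (A / (200 * q)) := by ring
    linarith
  rw [div_le_iff₀ (by positivity)] at h2
  calc A ≤ 400 * harm L * (q * Real.exp (2 * β)) * E := by linarith
    _ ≤ 400 * β * (Real.exp (1.75 * β) * Real.exp (2 * β)) * E := by gcongr
    _ = _ := by rw [← Real.exp_add]; congr 3; ring

lemma sum_wt_mul_num_le {β : ℝ} (hL : (L : ℝ) ≤ Real.exp (β / 2)) :
    ∑ D : Defects L, wt β D * num D ≤ Real.exp (Real.exp 1) := by
  have hpt : ∀ D : Defects L, wt β D * num D ≤ ∏ p, Real.exp ((1 - β) * ind (D p)) := by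
    intro D
    rw [← Real.exp_sum, ← Finset.mul_sum]
    calc wt β D * num D ≤ wt β D * Real.exp (num D) :=
          mul_le_mul_of_nonneg_left (by linarith [Real.add_one_le_exp (num D)]) (wt_pos _ _).le
      _ = Real.exp ((1 - β) * num D) := by rw [wt, ← Real.exp_add]; congr 1; ring
  have hsum : ∑ D : Defects L, ∏ p, Real.exp ((1 - β) * ind (D p))
      = (Real.exp (1 - β) + 1) ^ (L * L) := by
    have h := Finset.prod_univ_sum (fun _ : ZMod L × ZMod L => (Finset.univ : Finset (ZMod 2)))
      (fun _ a => Real.exp ((1 - β) * ind a))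
    rw [Fintype.piFinset_univ] at h
    rw [← h]
    have h2 : ∑ a : ZMod 2, Real.exp ((1 - β) * ind a) = Real.exp (1 - β) + 1 := by
      rw [show (Finset.univ : Finset (ZMod 2)) = {1, 0} from by decide,
        Finset.sum_pair (by decide), ind_one, ind_zero]
      simp
    simp [h2]
  have hl := size_pos (L := L)
  calc ∑ D : Defects L, wt β D * num D
      ≤ (Real.exp (1 - β) + 1) ^ (L * L) := hsum ▸ Finset.sum_le_sum fun D _ => hpt D
    _ ≤ Real.exp (Real.exp (1 - β)) ^ (L * L) :=
        pow_le_pow_left₀ (by positivity) (Real.add_one_le_exp _) _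
    _ = Real.exp ((L * L : ℝ) * Real.exp (1 - β)) := by
        rw [← Real.exp_nat_mul]; push_cast; rfl
    _ ≤ Real.exp (Real.exp 1) := by
        rw [Real.exp_le_exp]
        calc (L * L : ℝ) * Real.exp (1 - β)
            ≤ (Real.exp (β / 2) * Real.exp (β / 2)) * Real.exp (1 - β) := by gcongr
          _ = Real.exp 1 := by rw [← Real.exp_add, ← Real.exp_add]; congr 1; ring

/-! ### A Lyapunov function for the defect dynamics -/

lemma log_one_add_log_sub_le {u v : ℝ} (hu : 1 ≤ u) (hv : 1 ≤ v) :
    Real.log (1 + Real.log v) - Real.log (1 + Real.log u)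
      ≤ 1 / (u * (1 + Real.log u)) * (v - u) := by
  have hlu := Real.log_nonneg hu
  have hlv := Real.log_nonneg hv
  have hu0 : 0 < u := by linarith
  have key : ∀ {a b : ℝ}, 0 < a → 0 < b → Real.log b - Real.log a ≤ (b - a) / a := by
    intro a b ha hb
    rw [← Real.log_div hb.ne' ha.ne', sub_div, div_self ha.ne']
    exact Real.log_le_sub_one_of_pos (div_pos hb ha)
  calc _ ≤ (1 + Real.log v - (1 + Real.log u)) / (1 + Real.log u) :=
        key (by linarith) (by linarith)
    _ ≤ ((v - u) / u) / (1 + Real.log u) := by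
        refine div_le_div_of_nonneg_right ?_ (by linarith)
        linarith [key hu0 (by linarith : 0 < v)]
    _ = _ := by field_simp

lemma exists_lyapunov {β : ℝ} (hβ : 12800 ≤ β) (hL : (L : ℝ) ≤ Real.exp (β / 2)) :
    ∃ V : Defects L → ℝ, (∀ D, 0 ≤ V D) ∧
      (∀ D ∈ excited L, ReversibleChain.gen toggle (wt β) V D < -1) ∧
      ∀ D, V D ≤ 12800 * β ^ 3 * Real.exp (3.75 * β) := by
  set K : ℝ := 400 * β * Real.exp (3.75 * β) with hK
  have hβ0 : 0 < β := by linarith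
  have hK0 : 0 < K := by positivity
  obtain ⟨g, hg0, hgoff, hgen, hgsq⟩ := ReversibleChain.exists_exponential_moment
    (T := toggle) (p := wt β) (m := num) toggle_toggle (wt_pos β) (excited L) num_nonneg
    (fun D hD => by linarith [one_le_num hD.2]) hK0 fun f hf => sum_num_mul_sq_le hβ hL hf
  have hlog0 : ∀ D, 0 ≤ Real.log (1 + g D) := fun D => Real.log_nonneg (by linarith [hg0 D])
  have hlog : ∀ D ∈ excited L, Real.log (1 + g D) ≤ β * num D := by
    intro D hD
    have hn := one_le_num hD.2
    have h1 : wt β D * num D * g D ^ 2 ≤ Real.exp (Real.exp 1) :=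
      ((Finset.single_le_sum (f := fun D => wt β D * num D * g D ^ 2)
        (fun D _ => mul_nonneg (mul_nonneg (wt_pos _ _).le (num_nonneg _)) (sq_nonneg _))
        (Finset.mem_univ D)).trans hgsq).trans (sum_wt_mul_num_le hL)
    have h2 : g D ^ 2 ≤ Real.exp ((3 + β * num D) / 2) ^ 2 := by
      have e1 : wt β D * g D ^ 2 ≤ Real.exp 3 := by
        calc wt β D * g D ^ 2 ≤ wt β D * num D * g D ^ 2 :=
              mul_le_mul_of_nonneg_right (le_mul_of_one_le_right (wt_pos _ _).le hn) (sq_nonneg _)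
          _ ≤ Real.exp (Real.exp 1) := h1
          _ ≤ Real.exp 3 := Real.exp_le_exp.2 (by linarith [Real.exp_one_lt_d9])
      calc g D ^ 2 = Real.exp (β * num D) * (wt β D * g D ^ 2) := by
            rw [wt, ← mul_assoc, ← Real.exp_add, neg_mul, add_neg_cancel, Real.exp_zero, one_mul]
        _ ≤ Real.exp (β * num D) * Real.exp 3 := mul_le_mul_of_nonneg_left e1 (Real.exp_pos _).le
        _ = _ := by rw [← Real.exp_nat_mul, ← Real.exp_add]; congr 1; push_cast; ring
    have h3 : g D ≤ Real.exp ((3 + β * num D) / 2) :=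
      (sq_le_sq₀ (hg0 D) (Real.exp_pos _).le).1 h2
    rw [Real.log_le_iff_le_exp (by linarith [hg0 D])]
    have hx : 0 ≤ (3 + β * num D) / 2 := by nlinarith
    calc 1 + g D ≤ 2 * Real.exp ((3 + β * num D) / 2) := by linarith [Real.one_le_exp hx]
      _ ≤ Real.exp 1 * Real.exp ((3 + β * num D) / 2) :=
          mul_le_mul_of_nonneg_right (by linarith [Real.add_one_le_exp 1]) (Real.exp_pos _).le
      _ ≤ Real.exp (β * num D) := by
          rw [← Real.exp_add, Real.exp_le_exp]; nlinarith
  refine ⟨fun D => 16 * K * β * Real.log (1 + Real.log (1 + g D)), fun D => ?_, fun D hD => ?_,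
    fun D => ?_⟩
  · exact mul_nonneg (by positivity) (Real.log_nonneg (by linarith [hlog0 D]))
  · have hn := one_le_num hD.2
    set u := 1 + g D with hu
    have hu1 : 1 ≤ u := by linarith [hg0 D]
    have hl0 : 0 < 1 + Real.log u := by linarith [hlog0 D]
    have hle : ReversibleChain.gen toggle (wt β)
        (fun D => 16 * K * β * Real.log (1 + Real.log (1 + g D))) D
        ≤ 16 * K * β * (1 / (u * (1 + Real.log u))) * ReversibleChain.gen toggle (wt β) g D := by
      rw [ReversibleChain.gen, ReversibleChain.gen, Finset.mul_sum]
      refine Finset.sum_le_sum fun x _ => ?_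
      have h1 := log_one_add_log_sub_le hu1 (by linarith [hg0 (toggle x D)] : 1 ≤ 1 + g (toggle x D))
      have h2 : 0 ≤ ReversibleChain.cond toggle (wt β) x D / wt β D :=
        div_nonneg (ReversibleChain.cond_nonneg (wt_pos β) _ _) (wt_pos _ _).le
      have h3 := mul_le_mul_of_nonneg_left h1
        (mul_nonneg (by positivity : 0 ≤ 16 * K * β) h2)
      calc _ = 16 * K * β * (ReversibleChain.cond toggle (wt β) x D / wt β D) *
            (Real.log (1 + Real.log (1 + g (toggle x D))) - Real.log (1 + Real.log u)) := by ring
        _ ≤ _ := h3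
        _ = _ := by rw [hu]; ring
    refine hle.trans_lt ?_
    rw [hgen D hD]
    have heq : 16 * K * β * (1 / (u * (1 + Real.log u))) * -(1 / (4 * K) * num D * (1 + g D))
        = -(4 * β * num D / (1 + Real.log u)) := by
      rw [← hu]
      have : u ≠ 0 := by linarith
      field_simp
      norm_num
    rw [heq, neg_lt_neg_iff, lt_div_iff₀ hl0]
    have := hlog D hD
    nlinarith
  · by_cases hD : D ∈ excited L
    swap
    · simp only [hgoff D hD, add_zero, Real.log_one, mul_zero]
      positivity
    have hn : num D ≤ Real.exp β := by
      calc num D = ∑ r, rowNum D r := (sum_rowNum D).symm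
        _ ≤ ∑ _r : ZMod L, (L : ℝ) := Finset.sum_le_sum fun r _ => rowNum_le D r
        _ = L * L := sum_const_torus _
        _ ≤ Real.exp (β / 2) * Real.exp (β / 2) := by gcongr
        _ = Real.exp β := by rw [← Real.exp_add]; congr 1; ring
    have hb : Real.log (1 + Real.log (1 + g D)) ≤ 2 * β := by
      rw [Real.log_le_iff_le_exp (by linarith [hlog0 D])]
      calc 1 + Real.log (1 + g D) ≤ 1 + β * Real.exp β := by
            linarith [hlog D hD, mul_le_mul_of_nonneg_left hn hβ0.le]
        _ ≤ Real.exp β + β * Real.exp β := by linarith [Real.one_le_exp hβ0.le]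
        _ = (β + 1) * Real.exp β := by ring
        _ ≤ Real.exp β * Real.exp β :=
            mul_le_mul_of_nonneg_right (Real.add_one_le_exp β) (Real.exp_pos _).le
        _ = Real.exp (2 * β) := by rw [← Real.exp_add]; congr 1; ring
    calc 16 * K * β * Real.log (1 + Real.log (1 + g D)) ≤ 16 * K * β * (2 * β) :=
          mul_le_mul_of_nonneg_left hb (by positivity)
      _ = _ := by rw [hK]; ring

/-! ### From spin configurations to defect fields -/

/-- The identification of `Fin L` with `ℤ/L`. -/
def cyc : Fin L ≃ ZMod L where
  toFun i := (i.val : ZMod L)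
  invFun x := ⟨x.val, ZMod.val_lt x⟩
  left_inv i := Fin.ext (ZMod.val_cast_of_lt i.isLt)
  right_inv x := ZMod.natCast_zmod_val x

lemma cyc_fsucc (i : Fin L) : cyc (fsucc i) = cyc i + 1 := by
  change (((i.val + 1) % L : ℕ) : ZMod L) = (i.val : ZMod L) + 1
  rw [ZMod.natCast_mod, Nat.cast_succ]

/-- The identification of the sites with `(ℤ/L)²`. -/
def site : Fin L × Fin L ≃ ZMod L × ZMod L := cyc.prodCongr cyc

/-- The `ℤ/2`-valued spin field of a configuration. -/
def spin (σ : ConfigP L) (p : ZMod L × ZMod L) : ZMod 2 := if σ (site.symm p) then 0 else 1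

/-- The plaquette sums of a `ℤ/2`-valued field. -/
def plaq (s : Defects L) : Defects L := fun p =>
  s p + s (p.1 + 1, p.2) + s (p.1, p.2 + 1) + s (p.1 + 1, p.2 + 1)

/-- The defect field of a configuration. -/
def defects (σ : ConfigP L) : Defects L := plaq (spin σ)

lemma sval_eq (σ : ConfigP L) (x : Fin L × Fin L) : sval (σ x) = 1 - 2 * ind (spin σ (site x)) := by
  rw [spin, Equiv.symm_apply_apply, sval]
  cases σ x
  · rw [if_neg (by decide), if_neg (by decide), ind_one]; norm_num
  · rw [if_pos rfl, if_pos rfl, ind_zero]; norm_num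

lemma sign_mul (a b : ZMod 2) : (1 - 2 * ind a) * (1 - 2 * ind b) = 1 - 2 * ind (a + b) := by
  rcases eq_one_or b with rfl | rfl
  · rw [ind_add_one, ind_one]; ring
  · rw [add_zero, ind_zero]; ring

lemma plaqP_eq (σ : ConfigP L) (x : Fin L × Fin L) :
    plaqP L σ x = 1 - 2 * ind (defects σ (site x)) := by
  have h : ∀ i j : Fin L, site (i, j) = (cyc i, cyc j) := fun _ _ => rfl
  rw [plaqP, sval_eq, sval_eq, sval_eq, sval_eq, sign_mul, sign_mul, sign_mul]
  simp only [h, cyc_fsucc]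
  rfl

lemma hamP_eq (σ : ConfigP L) : hamP L σ = num (defects σ) - (L : ℝ) ^ 2 / 2 := by
  rw [hamP, Finset.sum_congr rfl fun x _ => plaqP_eq σ x, Finset.sum_sub_distrib, ← Finset.mul_sum,
    Equiv.sum_comp site fun p => ind (defects σ p)]
  simp only [Finset.sum_const, Finset.card_univ, Fintype.card_prod, Fintype.card_fin, nsmul_eq_mul]
  rw [num]
  push_cast
  ring

lemma spin_flipP (σ : ConfigP L) (y : Fin L × Fin L) :
    spin (flipP L σ y) = spin σ + pt (site y) := by
  funext p
  rw [Pi.add_apply, spin, spin, flipP]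
  by_cases h : p = site y
  · rw [h, pt_self, Equiv.symm_apply_apply, if_pos rfl]
    cases σ y <;> decide
  · rw [pt_of_ne h, add_zero, if_neg (c := site.symm p = y) fun h' => h (by rw [← h', Equiv.apply_symm_apply])]

lemma plaq_add {L : ℕ} (s t : Defects L) : plaq (s + t) = plaq s + plaq t := by
  funext p
  simp only [plaq, Pi.add_apply]
  ring

lemma plaq_pt {L : ℕ} (y : ZMod L × ZMod L) : plaq (pt y) = quad (y - (1, 1)) := by
  have h : ∀ a b : ZMod L, ∀ p : ZMod L × ZMod L,
      pt y (p.1 + a, p.2 + b) = pt (y.1 - a, y.2 - b) p := by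
    intro a b p
    simp only [pt, Prod.ext_iff, eq_sub_iff_add_eq]
  funext p
  have h0 := h 0 0 p
  have h1 := h 1 0 p
  have h2 := h 0 1 p
  have h3 := h 1 1 p
  simp only [add_zero, sub_zero] at h0 h1 h2
  rw [plaq, quad, h1, h2, h3, show pt y p = pt (y.1, y.2) p from rfl]
  simp only [Pi.add_apply, Prod.fst_sub, Prod.snd_sub, sub_add_cancel]
  rw [show y - (1, 1) = (y.1 - 1, y.2 - 1) from rfl]
  ring

lemma defects_flipP (σ : ConfigP L) (y : Fin L × Fin L) :
    defects (flipP L σ y) = toggle (site y - (1, 1)) (defects σ) := by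
  rw [defects, spin_flipP, plaq_add, plaq_pt, toggle, defects]

lemma even_plaq (s : Defects L) : Even (plaq s) := by
  have h : ∀ a b : ZMod 2, a + b + a + b = 0 := by decide
  constructor
  · intro r
    have e : ∀ r, ∑ c, s (r, c + 1) = ∑ c, s (r, c) := fun r =>
      Equiv.sum_comp (Equiv.addRight (1 : ZMod L)) fun c => s (r, c)
    simp only [plaq, Finset.sum_add_distrib]
    rw [e r, e (r + 1), h]
  · intro c
    have e : ∀ c, ∑ r, s (r + 1, c) = ∑ r, s (r, c) := fun c =>
      Equiv.sum_comp (Equiv.addRight (1 : ZMod L)) fun r => s (r, c)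
    simp only [plaq, Finset.sum_add_distrib]
    rw [e c, e (c + 1), add_right_comm, add_assoc, add_comm (∑ r, s (r, c) + _)]
    exact (by decide : ∀ a b : ZMod 2, b + b + (a + a) = 0) _ _

lemma defects_mem_excited {σ : ConfigP L} (h : σ ∉ GroundP L) : defects σ ∈ excited L := by
  refine ⟨even_plaq _, fun h0 => h fun η => ?_⟩
  rw [hamP_eq, hamP_eq, h0]
  have : num (0 : Defects L) = 0 := Finset.sum_eq_zero fun p _ => ind_zero
  linarith [num_nonneg (defects η)]

lemma mulVec_genP (L : ℕ) (β : ℝ) (h : ConfigP L → ℝ) (σ : ConfigP L) :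
    (genP L β).mulVec h σ
      = ∑ x, metroRateP L β σ (flipP L σ x) * (h (flipP L σ x) - h σ) := by
  have hne : ∀ x, flipP L σ x ≠ σ := by
    intro x hx
    have := congrFun hx x
    rw [flipP, if_pos rfl] at this
    exact Bool.not_ne_self _ this
  have hentry : ∀ η, genP L β σ η * h η = ∑ x, metroRateP L β σ (flipP L σ x) *
      ((if η = flipP L σ x then h η else 0) - if η = σ then h η else 0) := by
    intro η
    rw [genP]
    by_cases hη : η = σ
    · rw [if_pos hη, neg_mul, Finset.sum_mul, ← Finset.sum_neg_distrib]
      refine Finset.sum_congr rfl fun x _ => ?_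
      rw [if_neg fun h' => hne x (h'.symm.trans hη), if_pos hη]
      ring
    · rw [if_neg hη, Finset.sum_mul]
      refine Finset.sum_congr rfl fun x _ => ?_
      rw [if_neg hη]
      split_ifs <;> ring
  rw [Matrix.mulVec, dotProduct, Finset.sum_congr rfl fun η _ => hentry η, Finset.sum_comm]
  refine Finset.sum_congr rfl fun x _ => ?_
  rw [← Finset.mul_sum, Finset.sum_sub_distrib, Finset.sum_ite_eq', Finset.sum_ite_eq']
  simp

lemma metroRateP_flipP (β : ℝ) (σ : ConfigP L) (y : Fin L × Fin L) :
    metroRateP L β σ (flipP L σ y)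
      = ReversibleChain.cond toggle (wt β) (site y - (1, 1)) (defects σ) / wt β (defects σ) := by
  rw [metroRateP, ReversibleChain.cond, ← defects_flipP, hamP_eq, hamP_eq,
    ← min_div_div_right (wt_pos _ _).le, div_self (wt_pos _ _).ne', wt, wt, ← Real.exp_sub]
  congr 2
  ring

lemma mulVec_genP_defects (β : ℝ) (V : Defects L → ℝ) (σ : ConfigP L) :
    ∑ x, metroRateP L β σ (flipP L σ x) * (V (defects (flipP L σ x)) - V (defects σ))
      = ReversibleChain.gen toggle (wt β) V (defects σ) := by
  rw [ReversibleChain.gen]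
  refine Fintype.sum_equiv (site.trans (Equiv.subRight (1, 1))) _ _ fun y => ?_
  rw [metroRateP_flipP, defects_flipP]
  rfl

/-- The maximum principle: a Lyapunov function dominates the expected hitting times. -/
lemma hitting_time_le {β : ℝ} {h : ConfigP L → ℝ} (hground : ∀ σ ∈ GroundP L, h σ = 0)
    (hgen : ∀ σ, σ ∉ GroundP L → (genP L β).mulVec h σ = -1) {V : Defects L → ℝ}
    (hV : ∀ D, 0 ≤ V D) (hVgen : ∀ D ∈ excited L, ReversibleChain.gen toggle (wt β) V D < -1)
    (σ : ConfigP L) : h σ ≤ V (defects σ) := by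
  obtain ⟨τ, hτ⟩ := Finite.exists_max fun σ => h σ - V (defects σ)
  suffices hle : h τ - V (defects τ) ≤ 0 by linarith [hτ σ]
  by_cases hg : τ ∈ GroundP L
  · rw [hground τ hg]; linarith [hV (defects τ)]
  exfalso
  have h1 := hgen τ hg
  rw [mulVec_genP] at h1
  have h2 := hVgen _ (defects_mem_excited hg)
  rw [← mulVec_genP_defects] at h2
  have h3 : ∑ x, metroRateP L β τ (flipP L τ x) * (h (flipP L τ x) - h τ)
      ≤ ∑ x, metroRateP L β τ (flipP L τ x) * (V (defects (flipP L τ x)) - V (defects τ)) :=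
    Finset.sum_le_sum fun x _ => mul_le_mul_of_nonneg_left (by linarith [hτ (flipP L τ x)])
      (le_min zero_le_one (Real.exp_pos _).le)
  linarith

end Plaquette

/-- Lemma `LemmaHittingGround`, expected hitting time of the ground states:
at the critical length, the vector `h` of expected hitting times of `𝒢` (the unique function
with `h ≡ 0` on `𝒢` and `𝓛h ≡ -1` off `𝒢`) satisfies `max_σ h(σ) ≤ C β⁹ e^{3.75β}`. -/
theorem expected_hitting_time_ground :
    ∃ C β₀ : ℝ, 0 < C ∧ ∀ β : ℝ, β₀ ≤ β →
      ∀ h : ConfigP (Lc β) → ℝ,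
        (∀ σ ∈ GroundP (Lc β), h σ = 0) →
        (∀ σ : ConfigP (Lc β), σ ∉ GroundP (Lc β) → (genP (Lc β) β).mulVec h σ = -1) →
        ∀ σ : ConfigP (Lc β), h σ ≤ C * β ^ 9 * Real.exp (3.75 * β) := by
  refine ⟨12800, 12800, by norm_num, fun β hβ h hground hgen σ => ?_⟩
  have hpos : 0 < Lc β := Nat.floor_pos.2 (Real.one_le_exp (by linarith))
  have : NeZero (Lc β) := ⟨hpos.ne'⟩
  have hL : (Lc β : ℝ) ≤ Real.exp (β / 2) := Nat.floor_le (Real.exp_pos _).le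
  obtain ⟨V, hV, hVgen, hVle⟩ := Plaquette.exists_lyapunov hβ hL
  calc h σ ≤ V (Plaquette.defects σ) := Plaquette.hitting_time_le hground hgen hV hVgen σ
    _ ≤ 12800 * β ^ 3 * Real.exp (3.75 * β) := hVle _
    _ ≤ 12800 * β ^ 9 * Real.exp (3.75 * β) := by
        have : β ^ 3 ≤ β ^ 9 := pow_le_pow_right₀ (by linarith) (by norm_num)
        gcongr

end
end

section
/- Staying in the ground states: for the periodic SPM at L=L_c=⌊e^{β/2}⌋ and β sufficiently large, for every time t∈[e^{3.5β}, β²e^{4β}], sup_{σ∈𝒢} ℙ_σ[X_t∉𝒢] = sup_{σ∈𝒢} (e^{t𝓛}𝟙_{𝒢^c})(σ) ≤ C·L^{-1/2} for some constant C. -/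
open scoped BigOperators

attribute [local instance] Classical.propDecidable

noncomputable section

open SPMP

namespace SPMP

section MatrixExponential

variable {n : Type*} [Fintype n] [DecidableEq n]

open scoped Matrix.Norms.Operator in
theorem hasSum_mexp (A : Matrix n n ℝ) (i j : n) :
    HasSum (fun k : ℕ => (A ^ k) i j / (Nat.factorial k : ℝ)) (NormedSpace.exp A i j) := by
  have h := NormedSpace.exp_series_hasSum_exp' (𝕂 := ℝ) A
  have h' : HasSum (fun k : ℕ => (Nat.factorial k : ℝ)⁻¹ * (A ^ k) i j) (NormedSpace.exp A i j) :=
    Pi.hasSum.1 (Pi.hasSum.1 h i) j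
  simpa only [div_eq_inv_mul] using h'

theorem mexp_eq_exp (A : Matrix n n ℝ) : mexp A = NormedSpace.exp A := by
  ext i j
  exact (hasSum_mexp A i j).tsum_eq

theorem mexp_nonneg_of_nonneg {A : Matrix n n ℝ} (hA : ∀ i j, 0 ≤ A i j) (i j : n) :
    0 ≤ mexp A i j := by
  have hpow : ∀ (k : ℕ) (i j : n), 0 ≤ (A ^ k) i j := by
    intro k
    induction k with
    | zero =>
      intro i j
      rw [pow_zero, Matrix.one_apply]
      split_ifs <;> norm_num
    | succ k ih =>
      intro i j
      rw [pow_succ, Matrix.mul_apply]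
      exact Finset.sum_nonneg fun l _ => mul_nonneg (ih i l) (hA l j)
  exact tsum_nonneg fun k => div_nonneg (hpow k i j) (Nat.cast_nonneg _)

/-- The exponential of a matrix with nonnegative off-diagonal entries is nonnegative. -/
theorem mexp_nonneg {A : Matrix n n ℝ} (hA : ∀ i j, i ≠ j → 0 ≤ A i j) (i j : n) :
    0 ≤ mexp A i j := by
  obtain ⟨c, hc⟩ : ∃ c : ℝ, ∀ i, 0 ≤ A i i + c :=
    ⟨∑ l, |A l l|, fun i => by
      have h : |A i i| ≤ ∑ l, |A l l| := Finset.single_le_sum (f := fun l => |A l l|)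
        (fun l _ => abs_nonneg _) (Finset.mem_univ i)
      linarith [neg_abs_le (A i i)]⟩
  set D : Matrix n n ℝ := Matrix.diagonal fun _ => c with hD
  have hnonneg : ∀ i j, 0 ≤ (A + D) i j := by
    intro i j
    rw [hD, Matrix.add_apply, Matrix.diagonal_apply]
    split_ifs with h
    · exact h ▸ hc i
    · rw [add_zero]
      exact hA i j h
  have hcomm : Commute (A + D) (-D) := by
    refine Commute.neg_right ?_
    have : D = c • (1 : Matrix n n ℝ) := by
      rw [hD, Matrix.smul_one_eq_diagonal]
    rw [this]
    exact (Commute.one_right _).smul_right c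
  have hexp : mexp A = mexp (A + D) * Matrix.diagonal fun _ => Real.exp (-c) := by
    have hA' : A = (A + D) + -D := by abel
    have hneg : -D = Matrix.diagonal fun _ => -c := by
      rw [hD]
      ext i j
      simp [Matrix.diagonal_apply]
      split_ifs <;> simp
    rw [mexp_eq_exp, mexp_eq_exp]
    conv_lhs => rw [hA']
    rw [Matrix.exp_add_of_commute _ _ hcomm, hneg, Matrix.exp_diagonal]
    congr 2
    ext i
    rw [Pi.coe_exp, Real.exp_eq_exp_ℝ]
  rw [hexp, Matrix.mul_diagonal]
  exact mul_nonneg (mexp_nonneg_of_nonneg hnonneg i j) (Real.exp_pos _).le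

/-- If the rows of `A` sum to zero, the rows of its exponential sum to one. -/
theorem sum_mexp_eq_one {A : Matrix n n ℝ} (hA : ∀ i, ∑ j, A i j = 0) (i : n) :
    ∑ j, mexp A i j = 1 := by
  have hpow : ∀ k : ℕ, k ≠ 0 → ∑ j, (A ^ k) i j = 0 := by
    intro k hk
    obtain ⟨k, rfl⟩ := Nat.exists_eq_succ_of_ne_zero hk
    simp_rw [Nat.succ_eq_add_one, pow_succ, Matrix.mul_apply]
    rw [Finset.sum_comm]
    simp [← Finset.mul_sum, hA]
  have h := hasSum_sum (s := Finset.univ) fun j _ => hasSum_mexp A i j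
  rw [← mexp_eq_exp] at h
  refine h.unique ?_
  convert hasSum_single (α := ℝ) (0 : ℕ) ?_ using 1
  · simp [Matrix.one_apply]
  · intro k hk
    rw [← Finset.sum_div, hpow k hk, zero_div]

/-- Detailed balance is inherited by the exponential. -/
theorem mexp_detailed_balance {A : Matrix n n ℝ} {w : n → ℝ}
    (hA : ∀ i j, w i * A i j = w j * A j i) (i j : n) :
    w i * mexp A i j = w j * mexp A j i := by
  have hpow : ∀ (k : ℕ) (i j : n), w i * (A ^ k) i j = w j * (A ^ k) j i := by
    intro k
    induction k with
    | zero =>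
      intro i j
      by_cases h : i = j
      · rw [h]
      · simp [h, Ne.symm h]
    | succ k ih =>
      intro i j
      rw [pow_succ, Matrix.mul_apply, ← pow_succ, pow_succ', Matrix.mul_apply, Finset.mul_sum,
        Finset.mul_sum]
      refine Finset.sum_congr rfl fun l _ => ?_
      rw [← mul_assoc, ih, mul_right_comm, hA, mul_assoc]
  unfold mexp
  rw [← tsum_mul_left, ← tsum_mul_left]
  refine tsum_congr fun k => ?_
  rw [← mul_div_assoc, hpow, mul_div_assoc]

/-- A symmetry of `A` is a symmetry of its exponential. -/
theorem mexp_equivariant {A : Matrix n n ℝ} (e : n ≃ n) (hA : ∀ i j, A (e i) (e j) = A i j)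
    (i j : n) : mexp A (e i) (e j) = mexp A i j := by
  have hpow : ∀ (k : ℕ) (i j : n), (A ^ k) (e i) (e j) = (A ^ k) i j := by
    intro k
    induction k with
    | zero => intro i j; simp [Matrix.one_apply]
    | succ k ih =>
      intro i j
      rw [pow_succ, Matrix.mul_apply, Matrix.mul_apply, ← Equiv.sum_comp e]
      simp_rw [ih, hA]
  unfold mexp
  simp_rw [hpow]

end MatrixExponential

section Generator

variable {L : ℕ}

theorem flipP_ne (σ : ConfigP L) (x : Fin L × Fin L) : flipP L σ x ≠ σ := fun h => by
  simpa [flipP] using congrFun h x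

theorem flipP_flipP (σ : ConfigP L) (x : Fin L × Fin L) : flipP L (flipP L σ x) x = σ := by
  funext i
  by_cases h : i = x <;> simp [flipP, h]

theorem eq_flipP_comm {σ η : ConfigP L} {x : Fin L × Fin L} :
    η = flipP L σ x ↔ σ = flipP L η x := by
  constructor <;> (rintro rfl; rw [flipP_flipP])

theorem metroRateP_nonneg (β : ℝ) (σ η : ConfigP L) : 0 ≤ metroRateP L β σ η :=
  le_min zero_le_one (Real.exp_pos _).le

theorem genP_nonneg_of_ne (β : ℝ) {σ η : ConfigP L} (h : σ ≠ η) : 0 ≤ genP L β σ η := by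
  unfold genP
  rw [if_neg h.symm]
  refine Finset.sum_nonneg fun x _ => ?_
  split_ifs
  · exact metroRateP_nonneg β _ _
  · exact le_rfl

theorem sum_genP (β : ℝ) (σ : ConfigP L) : ∑ η, genP L β σ η = 0 := by
  rw [← Finset.add_sum_erase _ _ (Finset.mem_univ σ)]
  have h : ∑ η ∈ Finset.univ.erase σ, genP L β σ η
      = ∑ x : Fin L × Fin L, metroRateP L β σ (flipP L σ x) := by
    have : ∀ η ∈ Finset.univ.erase σ, genP L β σ η
        = ∑ x : Fin L × Fin L,
          if η = flipP L σ x then metroRateP L β σ (flipP L σ x) else 0 := by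
      intro η hη
      unfold genP
      rw [if_neg (Finset.ne_of_mem_erase hη)]
    rw [Finset.sum_congr rfl this, Finset.sum_comm]
    refine Finset.sum_congr rfl fun x _ => ?_
    rw [Finset.sum_ite_eq', if_pos]
    exact Finset.mem_erase.2 ⟨flipP_ne σ x, Finset.mem_univ _⟩
  rw [h]
  simp [genP]

theorem exp_mul_metroRateP (β : ℝ) (σ η : ConfigP L) :
    Real.exp (-β * hamP L σ) * metroRateP L β σ η
      = min (Real.exp (-β * hamP L σ)) (Real.exp (-β * hamP L η)) := by
  rw [metroRateP, mul_min_of_nonneg _ _ (Real.exp_pos _).le, mul_one, ← Real.exp_add]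
  ring_nf

theorem genP_detailed_balance (β : ℝ) (σ η : ConfigP L) :
    Real.exp (-β * hamP L σ) * genP L β σ η = Real.exp (-β * hamP L η) * genP L β η σ := by
  by_cases h : σ = η
  · rw [h]
  unfold genP
  rw [if_neg h, if_neg (Ne.symm h), Finset.mul_sum, Finset.mul_sum]
  refine Finset.sum_congr rfl fun x _ => ?_
  by_cases hx : η = flipP L σ x
  · rw [if_pos hx, if_pos (eq_flipP_comm.1 hx), ← hx, ← eq_flipP_comm.1 hx, exp_mul_metroRateP,
      exp_mul_metroRateP, min_comm]
  · rw [if_neg hx, if_neg (mt eq_flipP_comm.2 hx), mul_zero, mul_zero]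

end Generator

section Symmetry

variable {L : ℕ}

theorem sval_beq (a b : Bool) : sval (a == b) = sval a * sval b := by
  cases a <;> cases b <;> norm_num [sval]

theorem sval_mul_self (a : Bool) : sval a * sval a = 1 := by
  cases a <;> norm_num [sval]

theorem sval_injective : Function.Injective sval := by
  intro a b h
  cases a <;> cases b <;> norm_num [sval] at h <;> rfl

/-- The sign of the plaquette variable, coded as a Boolean spin; `false` marks a defect. -/
def plaqSign (σ : ConfigP L) (x : Fin L × Fin L) : Bool :=
  ((σ x == σ (fsucc x.1, x.2)) == σ (x.1, fsucc x.2)) == σ (fsucc x.1, fsucc x.2)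

theorem sval_plaqSign (σ : ConfigP L) (x : Fin L × Fin L) : sval (plaqSign σ x) = plaqP L σ x := by
  simp only [plaqSign, plaqP, sval_beq]

/-- Pointwise multiplication by a configuration, as a permutation of the configurations. -/
def mulEquiv (g : ConfigP L) : ConfigP L ≃ ConfigP L where
  toFun σ x := g x == σ x
  invFun σ x := g x == σ x
  left_inv σ := by
    funext x
    cases h : g x <;> simp [h]
  right_inv σ := by
    funext x
    cases h : g x <;> simp [h]

theorem mulEquiv_apply (g σ : ConfigP L) (x : Fin L × Fin L) : mulEquiv g σ x = (g x == σ x) := rfl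

theorem mulEquiv_comm (g σ : ConfigP L) : mulEquiv g σ = mulEquiv σ g := by
  funext x
  rw [mulEquiv_apply, mulEquiv_apply, Bool.beq_comm]

theorem mulEquiv_mulEquiv (g σ : ConfigP L) : mulEquiv g (mulEquiv g σ) = σ :=
  (mulEquiv g).left_inv σ

theorem plaqSign_mulEquiv (g σ : ConfigP L) (x : Fin L × Fin L) :
    plaqSign (mulEquiv g σ) x = (plaqSign g x == plaqSign σ x) := by
  apply sval_injective
  simp only [plaqSign, mulEquiv_apply, sval_beq]
  ring

theorem flipP_mulEquiv (g σ : ConfigP L) (x : Fin L × Fin L) :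
    flipP L (mulEquiv g σ) x = mulEquiv g (flipP L σ x) := by
  funext i
  simp only [flipP, mulEquiv_apply]
  split_ifs
  · cases g i <;> cases σ i <;> rfl
  · rfl

/-- The energy above the ground-state energy is the number of defects. -/
theorem exp_hamP (β : ℝ) (σ : ConfigP L) :
    Real.exp (-β * hamP L σ) = Real.exp (-β * hamP L fun _ => true) *
      ∏ x, if plaqSign σ x then 1 else Real.exp (-β) := by
  have h : ∀ x, (if plaqSign σ x then (1 : ℝ) else Real.exp (-β))
      = Real.exp (-β * ((1 - plaqP L σ x) / 2)) := by
    intro x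
    rw [← sval_plaqSign]
    cases plaqSign σ x <;> norm_num [sval]
  have htrue : ∀ x, plaqP L (fun _ => true) x = 1 := by
    intro x
    simp [plaqP, sval]
  simp_rw [h]
  rw [← Real.exp_sum, ← Real.exp_add, ← Finset.mul_sum, ← Finset.sum_div, Finset.sum_sub_distrib]
  unfold hamP
  simp_rw [htrue]
  ring_nf

theorem plaqP_le_one (σ : ConfigP L) (x : Fin L × Fin L) : plaqP L σ x ≤ 1 := by
  rw [← sval_plaqSign]
  cases plaqSign σ x <;> norm_num [sval]

theorem mem_GroundP_iff {σ : ConfigP L} : σ ∈ GroundP L ↔ ∀ x, plaqSign σ x = true := by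
  have hsum : ∀ η : ConfigP L, ∑ x, plaqP L η x ≤ ∑ _x : Fin L × Fin L, (1 : ℝ) := fun η =>
    Finset.sum_le_sum fun x _ => plaqP_le_one η x
  constructor
  · intro h
    have h1 := h fun _ => true
    have htrue : ∀ x, plaqP L (fun _ => true) x = 1 := by
      intro x
      simp [plaqP, sval]
    unfold hamP at h1
    simp_rw [htrue] at h1
    have h2 : ∑ x, plaqP L σ x = ∑ _x : Fin L × Fin L, (1 : ℝ) :=
      le_antisymm (hsum σ) (by linarith)
    intro x
    have h3 := (Finset.sum_eq_sum_iff_of_le fun x _ => plaqP_le_one σ x).1 h2 x (Finset.mem_univ x)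
    apply sval_injective
    rw [sval_plaqSign, h3]
    simp [sval]
  · intro h η
    have h1 : ∀ x, plaqP L σ x = 1 := by
      intro x
      rw [← sval_plaqSign, h x]
      simp [sval]
    have h2 := hsum η
    unfold hamP
    simp_rw [h1]
    linarith

theorem hamP_mulEquiv {g : ConfigP L} (hg : g ∈ GroundP L) (σ : ConfigP L) :
    hamP L (mulEquiv g σ) = hamP L σ := by
  unfold hamP
  congr 1
  refine Finset.sum_congr rfl fun x _ => ?_
  rw [← sval_plaqSign, plaqSign_mulEquiv, mem_GroundP_iff.1 hg x, ← sval_plaqSign]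
  simp

theorem genP_mulEquiv {g : ConfigP L} (hg : g ∈ GroundP L) (β : ℝ) (σ η : ConfigP L) :
    genP L β (mulEquiv g σ) (mulEquiv g η) = genP L β σ η := by
  simp only [genP, flipP_mulEquiv, metroRateP, hamP_mulEquiv hg, EmbeddingLike.apply_eq_iff_eq]

theorem mulEquiv_mem_GroundP_iff {g : ConfigP L} (hg : g ∈ GroundP L) {σ : ConfigP L} :
    mulEquiv g σ ∈ GroundP L ↔ σ ∈ GroundP L := by
  simp only [mem_GroundP_iff, plaqSign_mulEquiv, mem_GroundP_iff.1 hg]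
  simp

end Symmetry

section Counting

variable {L : ℕ}

theorem fsucc_bijective : Function.Bijective (fsucc : Fin L → Fin L) := by
  rw [← Finite.injective_iff_bijective]
  intro i j h
  have h' : (i.val + 1) % L = (j.val + 1) % L := congrArg Fin.val h
  have hmod : i.val ≡ j.val [MOD L] := Nat.ModEq.add_right_cancel' 1 h'
  apply Fin.ext
  rwa [Nat.ModEq, Nat.mod_eq_of_lt i.isLt, Nat.mod_eq_of_lt j.isLt] at hmod

/-- Every row contains an even number of defects. -/
theorem prod_row_sval_plaqSign (σ : ConfigP L) (i : Fin L) :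
    ∏ j, sval (plaqSign σ (i, j)) = 1 := by
  have hshift : ∀ f : Fin L → ℝ, ∏ j, f (fsucc j) = ∏ j, f j := fun f =>
    Function.Bijective.prod_comp fsucc_bijective f
  have hsplit : ∏ j, sval (plaqSign σ (i, j))
      = (∏ j, sval (σ (i, j)) * sval (σ (fsucc i, j))) *
        ∏ j, sval (σ (i, fsucc j)) * sval (σ (fsucc i, fsucc j)) := by
    rw [← Finset.prod_mul_distrib]
    refine Finset.prod_congr rfl fun j _ => ?_
    rw [sval_plaqSign, plaqP]
    ring
  rw [hsplit, hshift fun j => sval (σ (i, j)) * sval (σ (fsucc i, j)), ← Finset.prod_mul_distrib]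
  refine Finset.prod_eq_one fun j _ => ?_
  rw [mul_mul_mul_comm, sval_mul_self, sval_mul_self, one_mul]

/-- The weight of a row of plaquette signs: `q` per defect, and zero if the number of defects is
odd. -/
def rowWeight (q : ℝ) (r : Fin L → Bool) : ℝ :=
  (1 + ∏ j, sval (r j)) / 2 * ∏ j, if r j then 1 else q

theorem rowWeight_nonneg {q : ℝ} (hq : 0 ≤ q) (r : Fin L → Bool) : 0 ≤ rowWeight q r := by
  have habs : |∏ j, sval (r j)| = 1 := by
    rw [Finset.abs_prod]
    refine Finset.prod_eq_one fun j _ => ?_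
    cases r j <;> norm_num [sval]
  have := neg_abs_le (∏ j, sval (r j))
  refine mul_nonneg (by linarith) (Finset.prod_nonneg fun j _ => ?_)
  split_ifs
  · exact zero_le_one
  · exact hq

theorem sum_rowWeight (q : ℝ) :
    ∑ r : Fin L → Bool, rowWeight q r = ((1 + q) ^ L + (1 - q) ^ L) / 2 := by
  have h : ∀ r : Fin L → Bool, rowWeight q r
      = ((∏ j, if r j then 1 else q) + ∏ j, sval (r j) * if r j then 1 else q) / 2 := by
    intro r
    rw [rowWeight, Finset.prod_mul_distrib]
    ring
  simp_rw [h]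
  rw [← Finset.sum_div, Finset.sum_add_distrib,
    ← Fintype.sum_pow (fun b : Bool => if b then (1 : ℝ) else q),
    ← Fintype.sum_pow (fun b : Bool => sval b * if b then (1 : ℝ) else q)]
  simp [sval, sub_eq_add_neg]

theorem sum_rowWeight_le {q : ℝ} (hq : q ≤ 1) (hq' : -1 ≤ q) :
    ∑ r : Fin L → Bool, rowWeight q r ≤ Real.exp ((L * q) ^ 2 / 2) := by
  have h1 : (1 + q) ^ L ≤ Real.exp (L * q) := by
    rw [Real.exp_nat_mul]
    exact pow_le_pow_left₀ (by linarith) (by linarith [Real.add_one_le_exp q]) L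
  have h2 : (1 - q) ^ L ≤ Real.exp (-(L * q)) := by
    rw [← mul_neg, Real.exp_nat_mul]
    exact pow_le_pow_left₀ (by linarith) (by linarith [Real.add_one_le_exp (-q)]) L
  rw [sum_rowWeight]
  refine le_trans ?_ (Real.cosh_le_exp_half_sq _)
  rw [Real.cosh_eq]
  linarith

/-- The weight of a family of plaquette signs, restricted to families whose rows are all even. -/
def signWeight (q : ℝ) (p : ConfigP L) : ℝ := ∏ i, rowWeight q fun j => p (i, j)

theorem sum_signWeight (q : ℝ) :
    ∑ p : ConfigP L, signWeight q p = (∑ r : Fin L → Bool, rowWeight q r) ^ L := by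
  rw [Fintype.sum_pow]
  exact Fintype.sum_equiv (Equiv.curry (Fin L) (Fin L) Bool) _ _ fun p => rfl

theorem signWeight_true (q : ℝ) : signWeight q (fun _ : Fin L × Fin L => true) = 1 := by
  simp [signWeight, rowWeight, sval]

theorem signWeight_plaqSign (q : ℝ) (σ : ConfigP L) :
    signWeight q (plaqSign σ) = ∏ x, if plaqSign σ x then 1 else q := by
  rw [Fintype.prod_prod_type, signWeight]
  refine Finset.prod_congr rfl fun i _ => ?_
  rw [rowWeight, prod_row_sval_plaqSign]
  norm_num

/-- Multiplication by a fixed element embeds each fibre of the plaquette map into the ground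
states. -/
theorem card_plaqSign_fiber_le (p : ConfigP L) :
    (Finset.univ.filter fun σ : ConfigP L => plaqSign σ = p).card
      ≤ (Finset.univ.filter fun σ : ConfigP L => σ ∈ GroundP L).card := by
  rcases (Finset.univ.filter fun σ : ConfigP L => plaqSign σ = p).eq_empty_or_nonempty with h | h
  · rw [h]
    exact Nat.zero_le _
  · obtain ⟨τ, hτ⟩ := h
    refine Finset.card_le_card_of_injOn (mulEquiv τ) ?_ (mulEquiv τ).injective.injOn
    intro σ hσ
    simp only [Finset.coe_filter, Finset.mem_univ, true_and, Set.mem_ofPred_eq,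
      Finset.mem_filter] at hσ hτ ⊢
    rw [mem_GroundP_iff]
    intro x
    rw [plaqSign_mulEquiv, hσ, hτ]
    simp

theorem sum_excited_weight_le {q : ℝ} (hq : 0 ≤ q) (hq' : q ≤ 1) :
    ∑ σ : ConfigP L with σ ∉ GroundP L, ∏ x, (if plaqSign σ x then 1 else q)
      ≤ (Finset.univ.filter fun σ : ConfigP L => σ ∈ GroundP L).card *
        (Real.exp (L ^ 3 * q ^ 2 / 2) - 1) := by
  have hnonneg : ∀ p : ConfigP L, 0 ≤ signWeight q p := fun p =>
    Finset.prod_nonneg fun i _ => rowWeight_nonneg hq _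
  set N := (Finset.univ.filter fun σ : ConfigP L => σ ∈ GroundP L).card
  have hmaps : ∀ σ ∈ Finset.univ.filter (fun σ : ConfigP L => σ ∉ GroundP L),
      plaqSign σ ∈ Finset.univ.erase fun _ : Fin L × Fin L => true := by
    intro σ hσ
    refine Finset.mem_erase.2 ⟨fun h => ?_, Finset.mem_univ _⟩
    exact (Finset.mem_filter.1 hσ).2 (mem_GroundP_iff.2 fun x => congrFun h x)
  calc ∑ σ : ConfigP L with σ ∉ GroundP L, ∏ x, (if plaqSign σ x then 1 else q)
      = ∑ σ : ConfigP L with σ ∉ GroundP L, signWeight q (plaqSign σ) :=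
        Finset.sum_congr rfl fun σ _ => (signWeight_plaqSign q σ).symm
    _ = ∑ p ∈ Finset.univ.erase fun _ : Fin L × Fin L => true,
          ∑ σ ∈ (Finset.univ.filter fun σ : ConfigP L => σ ∉ GroundP L) with plaqSign σ = p,
            signWeight q (plaqSign σ) := (Finset.sum_fiberwise_of_maps_to hmaps _).symm
    _ ≤ ∑ p ∈ Finset.univ.erase fun _ : Fin L × Fin L => true, N * signWeight q p := by
        refine Finset.sum_le_sum fun p _ => ?_
        rw [Finset.sum_congr rfl fun σ hσ => by rw [(Finset.mem_filter.1 hσ).2],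
          Finset.sum_const, nsmul_eq_mul]
        refine mul_le_mul_of_nonneg_right ?_ (hnonneg p)
        refine Nat.cast_le.2 (le_trans (Finset.card_le_card ?_) (card_plaqSign_fiber_le p))
        exact Finset.filter_subset_filter _ (Finset.filter_subset _ _)
    _ = N * ((∑ r : Fin L → Bool, rowWeight q r) ^ L - 1) := by
        rw [← Finset.mul_sum, ← sum_signWeight,
          ← Finset.add_sum_erase _ _ (Finset.mem_univ fun _ : Fin L × Fin L => true),
          signWeight_true]
        ring
    _ ≤ N * (Real.exp (L ^ 3 * q ^ 2 / 2) - 1) := by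
        refine mul_le_mul_of_nonneg_left (sub_le_sub_right ?_ 1) (Nat.cast_nonneg _)
        refine (pow_le_pow_left₀ (Finset.sum_nonneg fun r _ => rowWeight_nonneg hq r)
          (sum_rowWeight_le hq' (by linarith)) L).trans_eq ?_
        rw [← Real.exp_nat_mul]
        ring_nf

end Counting

/-- Uniformly in time, the probability to be excited when started from a ground state is at most
the ratio of the Gibbs weights of the excited configurations and of the ground states. -/
theorem excited_probability_le (L : ℕ) {β t : ℝ} (hβ : 0 ≤ β) (ht : 0 ≤ t) {σ : ConfigP L}
    (hσ : σ ∈ GroundP L) :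
    ((mexp (t • genP L β)).mulVec (fun η => if η ∈ GroundP L then (0 : ℝ) else 1)) σ
      ≤ Real.exp (L ^ 3 * Real.exp (-β) ^ 2 / 2) - 1 := by
  set P := mexp (t • genP L β) with hP
  set S : Finset (ConfigP L) := Finset.univ.filter fun g => g ∈ GroundP L with hS
  set F : ConfigP L → ℝ := P.mulVec fun η => if η ∈ GroundP L then (0 : ℝ) else 1 with hF
  have hF_apply : ∀ g, F g = ∑ η : ConfigP L with η ∉ GroundP L, P g η := by
    intro g
    rw [hF, Matrix.mulVec, dotProduct, Finset.sum_filter]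
    refine Finset.sum_congr rfl fun η _ => ?_
    by_cases h : η ∈ GroundP L <;> simp [h]
  have hP_nonneg : ∀ η g, 0 ≤ P η g := mexp_nonneg fun η g h => by
    rw [Matrix.smul_apply, smul_eq_mul]
    exact mul_nonneg ht (genP_nonneg_of_ne β h)
  have hP_sum : ∀ η, ∑ g, P η g = 1 := sum_mexp_eq_one fun η => by
    simp_rw [Matrix.smul_apply, ← Finset.smul_sum, sum_genP, smul_zero]
  have hP_balance : ∀ η g, Real.exp (-β * hamP L η) * P η g = Real.exp (-β * hamP L g) * P g η :=
    mexp_detailed_balance (w := fun η => Real.exp (-β * hamP L η)) fun η g => by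
      rw [Matrix.smul_apply, Matrix.smul_apply, smul_eq_mul, smul_eq_mul, mul_left_comm,
        genP_detailed_balance, mul_left_comm]
  have hF_mul : ∀ g ∈ GroundP L, ∀ η, F (mulEquiv g η) = F η := by
    intro g hg η
    rw [hF, Matrix.mulVec, Matrix.mulVec, dotProduct, dotProduct, ← Equiv.sum_comp (mulEquiv g)]
    refine Finset.sum_congr rfl fun τ _ => ?_
    rw [hP, mexp_equivariant (mulEquiv g) fun η τ => by
      rw [Matrix.smul_apply, Matrix.smul_apply, genP_mulEquiv hg]]
    simp only [mulEquiv_mem_GroundP_iff hg]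
  have hF_const : ∀ g ∈ S, F g = F σ := by
    intro g hg
    have hg' : g ∈ GroundP L := (Finset.mem_filter.1 hg).2
    have h1 := hF_mul (mulEquiv g σ) ((mulEquiv_mem_GroundP_iff hg').2 hσ) g
    rw [mulEquiv_comm, mulEquiv_mulEquiv] at h1
    exact h1.symm
  have hP_ground : ∀ g ∈ S, ∀ η,
      P g η = (∏ x, if plaqSign η x then 1 else Real.exp (-β)) * P η g := by
    intro g hg η
    have h1 := hP_balance η g
    have hg' := mem_GroundP_iff.1 (Finset.mem_filter.1 hg).2
    rw [exp_hamP β η, exp_hamP β g] at h1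
    simp only [hg', if_true, Finset.prod_const_one, mul_one, mul_assoc] at h1
    exact (mul_left_cancel₀ (Real.exp_pos _).ne' h1).symm
  have hcard : (0 : ℝ) < S.card :=
    Nat.cast_pos.2 (Finset.card_pos.2 ⟨σ, Finset.mem_filter.2 ⟨Finset.mem_univ _, hσ⟩⟩)
  refine le_of_mul_le_mul_left ?_ hcard
  calc (S.card : ℝ) * F σ = ∑ g ∈ S, F g := by
        rw [Finset.sum_congr rfl hF_const, Finset.sum_const, nsmul_eq_mul]
    _ = ∑ η : ConfigP L with η ∉ GroundP L,
          (∏ x, if plaqSign η x then 1 else Real.exp (-β)) * ∑ g ∈ S, P η g := by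
        rw [Finset.sum_congr rfl fun g _ => hF_apply g]
        refine Finset.sum_comm.trans (Finset.sum_congr rfl fun η _ => ?_)
        rw [Finset.mul_sum]
        exact Finset.sum_congr rfl fun g hg => hP_ground g hg η
    _ ≤ ∑ η : ConfigP L with η ∉ GroundP L,
          ∏ x, (if plaqSign η x then 1 else Real.exp (-β)) := by
        refine Finset.sum_le_sum fun η _ => mul_le_of_le_one_right ?_ ?_
        · refine Finset.prod_nonneg fun x _ => ?_
          split_ifs
          · exact zero_le_one
          · exact (Real.exp_pos _).le
        · rw [← hP_sum η]
          exact Finset.sum_le_sum_of_subset_of_nonneg (Finset.subset_univ _)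
            fun g _ _ => hP_nonneg η g
    _ ≤ S.card * (Real.exp (L ^ 3 * Real.exp (-β) ^ 2 / 2) - 1) :=
        sum_excited_weight_le (Real.exp_pos _).le (Real.exp_le_one_iff.2 (by linarith))

end SPMP

/-- Lemma `LemmaDefinitelyInGS`, staying in the ground states: at the
critical length, for every `t ∈ [e^{3.5β}, β²e^{4β}]` and every ground state `σ`,
`ℙ_σ[X_t ∉ 𝒢] = (e^{t𝓛}𝟙_{𝒢ᶜ})(σ) ≤ C L^{-1/2}`. -/
theorem stay_in_ground_states :
    ∃ C β₀ : ℝ, 0 < C ∧ ∀ β : ℝ, β₀ ≤ β →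
      ∀ t : ℝ, Real.exp (3.5 * β) ≤ t → t ≤ β ^ 2 * Real.exp (4 * β) →
      ∀ σ ∈ GroundP (Lc β),
        ((mexp (t • genP (Lc β) β)).mulVec
            (fun η => if η ∈ GroundP (Lc β) then (0 : ℝ) else 1)) σ ≤
          C / Real.sqrt (Lc β : ℝ) := by
  refine ⟨1, 0, one_pos, fun β hβ t ht _ σ hσ => ?_⟩
  refine (excited_probability_le (Lc β) hβ ((Real.exp_pos _).le.trans ht) hσ).trans ?_
  have hL_one : (1 : ℝ) ≤ Lc β :=
    Nat.one_le_cast.2 (Nat.le_floor (by simpa using (Real.one_le_exp (by linarith : 0 ≤ β / 2))))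
  have hL_le : (Lc β : ℝ) ≤ Real.exp (β / 2) := Nat.floor_le (Real.exp_pos _).le
  set l : ℝ := (Lc β : ℝ)
  have hl : 0 < l := by linarith
  have hq : Real.exp (-β) * l ^ 2 ≤ 1 := by
    calc Real.exp (-β) * l ^ 2 ≤ Real.exp (-β) * Real.exp (β / 2) ^ 2 := by gcongr
      _ = 1 := by
        rw [← Real.exp_nat_mul, ← Real.exp_add]
        norm_num
        ring
  have hx : l ^ 3 * Real.exp (-β) ^ 2 / 2 ≤ 1 / (2 * l) := by
    rw [div_le_div_iff₀ two_pos (by positivity)]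
    nlinarith [pow_le_one₀ (n := 2) (by positivity) hq]
  have hx_nonneg : 0 ≤ l ^ 3 * Real.exp (-β) ^ 2 / 2 := by positivity
  have hhalf : 1 / (2 * l) ≤ 1 / 2 := one_div_le_one_div_of_le two_pos (by linarith)
  have hexp : Real.exp (l ^ 3 * Real.exp (-β) ^ 2 / 2) - 1 ≤ 1 / l := by
    have h1 := Real.abs_exp_sub_one_le (x := l ^ 3 * Real.exp (-β) ^ 2 / 2)
      (by rw [abs_of_nonneg hx_nonneg]; linarith)
    rw [abs_of_nonneg hx_nonneg] at h1
    have h2 : 2 * (1 / (2 * l)) = 1 / l := by field_simp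
    linarith [le_abs_self (Real.exp (l ^ 3 * Real.exp (-β) ^ 2 / 2) - 1)]
  refine hexp.trans (one_div_le_one_div_of_le (Real.sqrt_pos.2 hl) ?_)
  exact Real.sqrt_le_self_iff.2 (Or.inr hL_one)

end
end
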